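/- arXiv:1604.06039 — 2 statements merged into one kernel-verified Lean document; each statement's English description precedes it below -/
import Mathlib

section
/- Let $n \geq 3$ and $0 < 2\rho < \rho_0 < \rho_1 < \rho_2 < 1$. Let $G(x,y)$ be the Green's function of $-\Delta$ on the annulus $B_1(0) \setminus \bar B_\rho(0) \subset \mathbb{R}^n$. Then there exists a constant $C > 1$, depending only on $n, \rho_0, \rho_1, \rho_2$ (and not on $\rho$), such that $G(x,y) \geq \frac{1}{C}\big(1 - \frac{\rho^{n-2}}{|y|^{n-2}}\big)$ for all $\rho \leq |y| \leq \rho_0$ and $\rho_1 \leq |x| \leq \rho_2$. In particular $G(x,y) \geq 1/C'$ for all $2\rho \leq |y| \leq \rho_0$ and $\rho_1 \leq |x| \leq \rho_2$, with $C'$ depending only on $n, \rho_0, \rho_1, \rho_2$. -/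
open Metric Set MeasureTheory

/-- The (flat) Laplacian, as the sum of the second partial derivatives. -/
noncomputable def lap {n : ℕ} (u : EuclideanSpace ℝ (Fin n) → ℝ)
    (x : EuclideanSpace ℝ (Fin n)) : ℝ :=
  ∑ i, fderiv ℝ (fun y => fderiv ℝ u y (EuclideanSpace.single i 1)) x
    (EuclideanSpace.single i 1)

theorem gl_second_deriv_nonneg {g : ℝ → ℝ} (hm : IsLocalMin g 0) (hc : ContinuousAt g 0) :
    0 ≤ deriv (deriv g) 0 := by
  by_contra hneg
  push Not at hneg
  have hM := isLocalMax_of_deriv_deriv_neg hneg hm.deriv_eq_zero hc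
  have he : g =ᶠ[nhds 0] fun _ => g 0 := by
    filter_upwards [hm, hM] with t h1 h2
    exact le_antisymm h2 h1
  have h2 := he.deriv.deriv
  have := h2.eq_of_nhds
  simp at this
  linarith

section
variable {n : ℕ}

theorem gl_contDiff_dir {u : EuclideanSpace ℝ (Fin n) → ℝ} {a : EuclideanSpace ℝ (Fin n)}
    (hu : ContDiffAt ℝ 2 u a) (e : EuclideanSpace ℝ (Fin n)) :
    DifferentiableAt ℝ (fun y => fderiv ℝ u y e) a := by
  have h1 : ContDiffAt ℝ 1 (fderiv ℝ u) a := hu.fderiv_right (by norm_num)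
  exact (h1.differentiableAt (by norm_num)).clm_apply (differentiableAt_const e)

theorem gl_eventually_diff {u : EuclideanSpace ℝ (Fin n) → ℝ} {a : EuclideanSpace ℝ (Fin n)}
    (hu : ContDiffAt ℝ 2 u a) : ∀ᶠ y in nhds a, DifferentiableAt ℝ u y := by
  filter_upwards [hu.eventually (by norm_num)] with y hy
  exact hy.differentiableAt (by norm_num)

theorem gl_dir_nonneg {u : EuclideanSpace ℝ (Fin n) → ℝ} {a : EuclideanSpace ℝ (Fin n)}
    (hu : ContDiffAt ℝ 2 u a) (hm : IsLocalMin u a) (e : EuclideanSpace ℝ (Fin n)) :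
    0 ≤ fderiv ℝ (fun y => fderiv ℝ u y e) a e := by
  have hl : ∀ t : ℝ, HasDerivAt (fun t : ℝ => a + t • e) e t := by
    intro t
    simpa using ((hasDerivAt_id t).smul_const e).const_add a
  have ht : Filter.Tendsto (fun t : ℝ => a + t • e) (nhds 0) (nhds a) := by
    have := (hl 0).continuousAt.tendsto
    simpa using this
  have h1 : IsLocalMin (fun t : ℝ => u (a + t • e)) 0 := by
    have := ht.eventually hm
    filter_upwards [this] with t h
    simpa using h
  have hc : ContinuousAt (fun t : ℝ => u (a + t • e)) 0 := by
    have h2 : ContinuousAt u (a + (0:ℝ) • e) := by simpa using hu.continuousAt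
    exact ContinuousAt.comp (f := fun t : ℝ => a + t • e) h2 (hl 0).continuousAt
  have h3 := gl_second_deriv_nonneg h1 hc
  have h4 : deriv (fun t : ℝ => u (a + t • e)) =ᶠ[nhds 0]
      fun t => fderiv ℝ u (a + t • e) e := by
    filter_upwards [ht.eventually (gl_eventually_diff hu)] with t h
    exact (h.hasFDerivAt.comp_hasDerivAt t (hl t)).deriv
  rw [h4.deriv_eq] at h3
  have h5 : HasFDerivAt (fun y => fderiv ℝ u y e) (fderiv ℝ (fun y => fderiv ℝ u y e) a)
      (a + (0:ℝ) • e) := by simpa using (gl_contDiff_dir hu e).hasFDerivAt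
  have h6 := (h5.comp_hasDerivAt (0:ℝ) (hl 0)).deriv
  have h7 : deriv (fun t : ℝ => fderiv ℝ u (a + t • e) e) 0
     = fderiv ℝ (fun y => fderiv ℝ u y e) a e := h6
  rwa [h7] at h3

theorem gl_lap_nonneg {u : EuclideanSpace ℝ (Fin n) → ℝ} {a : EuclideanSpace ℝ (Fin n)}
    (hu : ContDiffAt ℝ 2 u a) (hm : IsLocalMin u a) : 0 ≤ lap u a :=
  Finset.sum_nonneg fun _ _ => gl_dir_nonneg hu hm _

theorem gl_lap_sub {u v : EuclideanSpace ℝ (Fin n) → ℝ} {a : EuclideanSpace ℝ (Fin n)}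
    (hu : ContDiffAt ℝ 2 u a) (hv : ContDiffAt ℝ 2 v a) :
    lap (fun y => u y - v y) a = lap u a - lap v a := by
  unfold lap
  rw [← Finset.sum_sub_distrib]
  refine Finset.sum_congr rfl fun i _ => ?_
  have h : (fun y => fderiv ℝ (fun y => u y - v y) y (EuclideanSpace.single i 1)) =ᶠ[nhds a]
      fun y => fderiv ℝ u y (EuclideanSpace.single i 1)
        - fderiv ℝ v y (EuclideanSpace.single i 1) := by
    filter_upwards [gl_eventually_diff hu, gl_eventually_diff hv] with y h1 h2
    rw [fderiv_fun_sub h1 h2]; rfl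
  rw [h.fderiv_eq, fderiv_fun_sub (gl_contDiff_dir hu _) (gl_contDiff_dir hv _)]
  rfl

theorem gl_lap_const_mul {u : EuclideanSpace ℝ (Fin n) → ℝ} {a : EuclideanSpace ℝ (Fin n)}
    (hu : ContDiffAt ℝ 2 u a) (c : ℝ) :
    lap (fun y => c * u y) a = c * lap u a := by
  unfold lap
  rw [Finset.mul_sum]
  refine Finset.sum_congr rfl fun i _ => ?_
  have h : (fun y => fderiv ℝ (fun y => c * u y) y (EuclideanSpace.single i 1)) =ᶠ[nhds a]
      fun y => c * fderiv ℝ u y (EuclideanSpace.single i 1) := by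
    filter_upwards [gl_eventually_diff hu] with y h1
    rw [fderiv_const_mul h1]; rfl
  rw [h.fderiv_eq, fderiv_const_mul (gl_contDiff_dir hu _)]
  rfl

theorem gl_lap_const (a : EuclideanSpace ℝ (Fin n)) (c : ℝ) :
    lap (fun _ => c) a = 0 := by
  unfold lap; simp

theorem gl_lap_normsq (a : EuclideanSpace ℝ (Fin n)) :
    lap (fun y => ‖y‖ ^ 2) a = 2 * n := by
  unfold lap
  have h : ∀ i : Fin n, (fun y : EuclideanSpace ℝ (Fin n) =>
      fderiv ℝ (fun y => ‖y‖ ^ 2) y (EuclideanSpace.single i 1)) = fun y => 2 * y i := by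
    intro i; funext y
    have h0 : HasFDerivAt (fun y : EuclideanSpace ℝ (Fin n) => ‖y‖ ^ 2) _ y :=
      (hasFDerivAt_id y).norm_sq
    rw [h0.fderiv]
    simp [EuclideanSpace.inner_single_right]
  have h2 : ∀ i : Fin n, HasFDerivAt (fun y : EuclideanSpace ℝ (Fin n) => 2 * y i)
      ((2:ℝ) • (EuclideanSpace.proj i : EuclideanSpace ℝ (Fin n) →L[ℝ] ℝ)) a := fun i =>
    ((EuclideanSpace.proj i : EuclideanSpace ℝ (Fin n) →L[ℝ] ℝ).hasFDerivAt).const_mul 2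
  simp_rw [h, fun i => (h2 i).fderiv]
  simp
  ring

/-- Weak minimum principle. -/
theorem gl_min_principle (hn : 0 < n) {U : Set (EuclideanSpace ℝ (Fin n))} (hU : IsOpen U)
    (hb : Bornology.IsBounded U) {u : EuclideanSpace ℝ (Fin n) → ℝ}
    (hc : ContinuousOn u (closure U)) (hd : ∀ y ∈ U, ContDiffAt ℝ 2 u y)
    (hl : ∀ y ∈ U, lap u y = 0) (hf : ∀ y ∈ closure U, y ∉ U → 0 ≤ u y) :
    ∀ y ∈ U, 0 ≤ u y := by
  intro y0 hy0
  by_contra hneg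
  push Not at hneg
  obtain ⟨R, hR0, hR⟩ := hb.closure.exists_pos_norm_le
  obtain ⟨ε, hε, hεR⟩ : ∃ ε > 0, ε * R ^ 2 < - u y0 := by
    refine ⟨- u y0 / (2 * R ^ 2), by apply div_pos; linarith; positivity, ?_⟩
    field_simp
    linarith
  have hK : IsCompact (closure U) := hb.isCompact_closure
  obtain ⟨a, haU, ha⟩ := hK.exists_isMinOn ⟨y0, subset_closure hy0⟩
    (f := fun y => u y - ε * ‖y‖ ^ 2) (by fun_prop)
  have h1 : u a - ε * ‖a‖ ^ 2 ≤ u y0 - ε * ‖y0‖ ^ 2 := ha (subset_closure hy0)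
  have haU' : a ∈ U := by
    by_contra hna
    have h2 := hf a haU hna
    have h3 : ε * ‖a‖ ^ 2 ≤ ε * R ^ 2 := by
      have := hR a haU
      gcongr
    have : 0 ≤ ε * ‖y0‖ ^ 2 := by positivity
    linarith
  have hm : IsLocalMin (fun y => u y - ε * ‖y‖ ^ 2) a := by
    filter_upwards [hU.mem_nhds haU'] with y hy
    exact ha (subset_closure hy)
  have hs : ContDiffAt ℝ 2 (fun y : EuclideanSpace ℝ (Fin n) => ‖y‖ ^ 2) a :=
    (contDiff_norm_sq ℝ).contDiffAt
  have hs' : ContDiffAt ℝ 2 (fun y : EuclideanSpace ℝ (Fin n) => ε * ‖y‖ ^ 2) a :=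
    contDiffAt_const.mul hs
  have h4 := gl_lap_nonneg ((hd a haU').sub hs') hm
  have h5 := gl_lap_sub (hd a haU') hs'
  rw [gl_lap_const_mul hs, gl_lap_normsq, hl a haU'] at h5
  have : lap (u - fun y => ε * ‖y‖ ^ 2) a = 0 - ε * (2 * n) := h5
  have h6 : (0:ℝ) < n := by exact_mod_cast hn
  have h7 : 0 < ε * (2 * n) := by positivity
  linarith

/-- The fundamental solution. -/
theorem gl_fund_contDiff {z y : EuclideanSpace ℝ (Fin n)} (p : ℝ) (h : z ≠ y) :
    ContDiffAt ℝ 2 (fun y => ‖z - y‖ ^ p) y := by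
  have h1 : z - y ≠ 0 := sub_ne_zero.mpr h
  have h2 : ContDiffAt ℝ 2 (fun y => ‖z - y‖) y :=
    (contDiffAt_const.sub contDiffAt_id).norm ℝ h1
  exact h2.rpow_const_of_ne (norm_ne_zero_iff.mpr h1)

theorem gl_sq_rpow_hasFDerivAt {z y : EuclideanSpace ℝ (Fin n)} (p : ℝ) (h : z ≠ y) :
    HasFDerivAt (fun y => (‖z - y‖ ^ 2) ^ p)
      ((p * (‖z - y‖ ^ 2) ^ (p - 1)) • (-(2:ℝ) • innerSL ℝ (z - y))) y := by
  have h1 : z - y ≠ 0 := sub_ne_zero.mpr h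
  have h2 : ‖z - y‖ ^ 2 ≠ 0 := pow_ne_zero _ (norm_ne_zero_iff.mpr h1)
  have h3 : HasFDerivAt (fun y => z - y)
    (-(ContinuousLinearMap.id ℝ (EuclideanSpace ℝ (Fin n)))) y := by
    simpa using (hasFDerivAt_id y).const_sub z
  have h4 := h3.norm_sq.rpow_const (p := p) (Or.inl h2)
  have h5 : (-(2:ℝ) • innerSL ℝ (z - y) : EuclideanSpace ℝ (Fin n) →L[ℝ] ℝ) =
      2 • (innerSL ℝ (z - y)) ∘SL (-(ContinuousLinearMap.id ℝ (EuclideanSpace ℝ (Fin n)))) := by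
    ext v
    simp
    ring
  rw [h5]
  exact h4

theorem gl_fund_lap {z y : EuclideanSpace ℝ (Fin n)} (h : z ≠ y) :
    lap (fun y => ‖z - y‖ ^ ((2:ℝ) - n)) y = 0 := by
  set p : ℝ := (2 - n) / 2 with hp
  have e1 : (fun y => ‖z - y‖ ^ ((2:ℝ) - n)) = fun y => (‖z - y‖ ^ 2) ^ p := by
    funext y
    rw [← Real.rpow_natCast, ← Real.rpow_mul (norm_nonneg _)]
    congr 1
    rw [hp]; push_cast; ring
  rw [e1]
  unfold lap
  have e2 : ∀ i : Fin n, (fun y : EuclideanSpace ℝ (Fin n) =>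
      fderiv ℝ (fun y => (‖z - y‖ ^ 2) ^ p) y (EuclideanSpace.single i 1)) =ᶠ[nhds y]
      fun y => (‖z - y‖ ^ 2) ^ (p - 1) * (-(2 * p) * (z i - y i)) := by
    intro i
    filter_upwards [isOpen_ne.mem_nhds h.symm] with w hw
    rw [(gl_sq_rpow_hasFDerivAt p (Ne.symm hw)).fderiv]
    simp [EuclideanSpace.inner_single_right]
    ring
  have e3 : ∀ i : Fin n, HasFDerivAt
      (fun y : EuclideanSpace ℝ (Fin n) => -(2 * p) * (z i - y i))
      ((-(2 * p)) • (-(EuclideanSpace.proj i : EuclideanSpace ℝ (Fin n) →L[ℝ] ℝ))) y := fun i =>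
    (((EuclideanSpace.proj i : EuclideanSpace ℝ (Fin n) →L[ℝ] ℝ).hasFDerivAt).const_sub
      (z i)).const_mul _
  have e4 : ∀ i : Fin n, fderiv ℝ (fun y : EuclideanSpace ℝ (Fin n) =>
      fderiv ℝ (fun y => (‖z - y‖ ^ 2) ^ p) y (EuclideanSpace.single i 1)) y
      (EuclideanSpace.single i 1) = (‖z - y‖ ^ 2) ^ (p - 1) * (2 * p) +
        4 * p * (p - 1) * (‖z - y‖ ^ 2) ^ (p - 1 - 1) * (z i - y i) ^ 2 := by
    intro i
    rw [(e2 i).fderiv_eq, ((gl_sq_rpow_hasFDerivAt (p - 1) h).fun_mul (e3 i)).fderiv]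
    simp [EuclideanSpace.inner_single_right]
    ring
  simp_rw [e4]
  rw [Finset.sum_add_distrib, ← Finset.mul_sum (f := fun i => (z i - y i) ^ 2)]
  have e5 : ∑ i, (z i - y i) ^ 2 = ‖z - y‖ ^ 2 := by
    rw [EuclideanSpace.real_norm_sq_eq]; simp
  have h2 : 0 < ‖z - y‖ ^ 2 := by
    have := norm_pos_iff.mpr (sub_ne_zero.mpr h)
    positivity
  have e6 : (‖z - y‖ ^ 2) ^ (p - 1) = (‖z - y‖ ^ 2) ^ (p - 1 - 1) * ‖z - y‖ ^ 2 := by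
    conv_lhs => rw [show p - 1 = (p - 1 - 1) + 1 by ring, Real.rpow_add h2, Real.rpow_one]
  rw [e5, e6]
  simp
  rw [hp]; ring

end

/-- Points of `K` reachable from `a` by `k` jumps of size less than `r`. -/
def glReach {X : Type*} [PseudoMetricSpace X] (K : Set X) (r : ℝ) (a : X) : ℕ → Set X
  | 0 => {a}
  | k + 1 => {w | w ∈ K ∧ ∃ z ∈ glReach K r a k, dist z w < r}

theorem gl_reach_sub {X : Type*} [PseudoMetricSpace X] {K : Set X} {r : ℝ} {a : X} (ha : a ∈ K) :
    ∀ k, glReach K r a k ⊆ K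
  | 0 => by intro x hx; rw [glReach, mem_singleton_iff] at hx; rwa [hx]
  | k + 1 => fun _ hx => hx.1

theorem gl_reach_mono {X : Type*} [PseudoMetricSpace X] {K : Set X} {r : ℝ} (hr : 0 < r) {a : X}
    (ha : a ∈ K) : Monotone (glReach K r a) :=
  monotone_nat_of_le_succ fun k x hx => ⟨gl_reach_sub ha k hx, x, hx, by simpa using hr⟩

theorem gl_reach_trans {X : Type*} [PseudoMetricSpace X] {K : Set X} {r : ℝ} {a b : X} {k : ℕ}
    (hb : b ∈ glReach K r a k) : ∀ l c, c ∈ glReach K r b l → c ∈ glReach K r a (k + l)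
  | 0, c, hc => by rw [glReach, mem_singleton_iff] at hc; rwa [hc]
  | l + 1, c, hc => by
    obtain ⟨h1, z, hz, h2⟩ := hc
    exact ⟨h1, z, gl_reach_trans hb l z hz, h2⟩

theorem gl_reach_symm {X : Type*} [PseudoMetricSpace X] {K : Set X} {r : ℝ} {a : X} (ha : a ∈ K) :
    ∀ k b, b ∈ glReach K r a k → a ∈ glReach K r b k
  | 0, b, hb => by rw [glReach, mem_singleton_iff] at hb ⊢; exact hb.symm
  | k + 1, b, hb => by
    obtain ⟨h1, z, hz, h2⟩ := hb
    have h3 : z ∈ glReach K r b 1 :=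
      ⟨gl_reach_sub ha k hz, b, rfl, by rwa [dist_comm]⟩
    have := gl_reach_trans h3 k a (gl_reach_symm ha k z hz)
    rwa [add_comm] at this

theorem gl_chain {X : Type*} [PseudoMetricSpace X] {K : Set X} (hK : IsCompact K)
    (hc : IsPreconnected K) {r : ℝ} (hr : 0 < r) :
    ∃ N : ℕ, ∀ a ∈ K, ∀ b ∈ K, b ∈ glReach K r a N := by
  rcases K.eq_empty_or_nonempty with h | ⟨o, ho⟩
  · exact ⟨0, by simp [h]⟩
  let V : ℕ → Set X := fun k => ⋃ z ∈ glReach K r o k, ball z r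
  have hV : ∀ k, IsOpen (V k) := fun k => isOpen_biUnion fun _ _ => isOpen_ball
  have hVm : Monotone V := fun k l hkl => biUnion_subset_biUnion_left (gl_reach_mono hr ho hkl)
  have hVr : ∀ k, V k ∩ K ⊆ glReach K r o (k + 1) := by
    rintro k x ⟨hx, hxK⟩
    simp only [V, mem_iUnion, mem_ball] at hx
    obtain ⟨z, hz, h⟩ := hx
    exact ⟨hxK, z, hz, by rwa [dist_comm]⟩
  have hsub : K ⊆ ⋃ k, V k := by
    have hkey : ∀ k z w, z ∈ glReach K r o k → w ∈ K → dist z w < r →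
        w ∈ ⋃ k, glReach K r o k := fun k z w hz hw h =>
      mem_iUnion.mpr ⟨k + 1, hw, z, hz, h⟩
    have hr2 : 0 < r / 2 := by linarith
    have := isPreconnected_iff_subset_of_disjoint.mp hc
      (⋃ z ∈ (⋃ k, glReach K r o k), ball z (r / 2))
      (⋃ z ∈ (K \ ⋃ k, glReach K r o k), ball z (r / 2))
      (isOpen_biUnion fun _ _ => isOpen_ball) (isOpen_biUnion fun _ _ => isOpen_ball) ?_ ?_
    · rcases this with h | h
      · intro x hx
        have h1 := h hx
        simp only [mem_iUnion, mem_ball] at h1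
        obtain ⟨z, ⟨k, hz⟩, h2⟩ := h1
        refine mem_iUnion.mpr ⟨k, ?_⟩
        simp only [V, mem_iUnion, mem_ball]
        exact ⟨z, hz, by linarith⟩
      · have h1 := h ho
        simp only [mem_iUnion, mem_ball, exists_prop] at h1
        obtain ⟨w, hw, h2⟩ := h1
        exact absurd (hkey 0 o w rfl hw.1 (by linarith)) hw.2
    · intro x hx
      by_cases h : x ∈ ⋃ k, glReach K r o k
      · exact Or.inl (mem_biUnion h (mem_ball_self hr2))
      · exact Or.inr (mem_biUnion (t := fun z => ball z (r / 2)) ⟨hx, h⟩ (mem_ball_self hr2))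
    · rw [eq_empty_iff_forall_notMem]
      rintro x ⟨-, h1, h2⟩
      simp only [mem_iUnion, mem_ball, exists_prop] at h1 h2
      obtain ⟨z, ⟨k, hz⟩, h3⟩ := h1
      obtain ⟨w, hw, h4⟩ := h2
      refine hw.2 (hkey k z w hz hw.1 ?_)
      have := dist_triangle_left z w x
      linarith
  obtain ⟨N, hN⟩ := hK.elim_directed_cover V hV hsub hVm.directed_le
  refine ⟨(N + 1) + (N + 1), fun a ha b hb => ?_⟩
  exact gl_reach_trans (gl_reach_symm ho _ a (hVr N ⟨hN ha, ha⟩)) _ b (hVr N ⟨hN hb, hb⟩)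

theorem gl_annulus {n : ℕ} (hn : 3 ≤ n) {s t : ℝ} (hs : 0 < s) :
    IsCompact {z : EuclideanSpace ℝ (Fin n) | s ≤ ‖z‖ ∧ ‖z‖ ≤ t} ∧
    IsPreconnected {z : EuclideanSpace ℝ (Fin n) | s ≤ ‖z‖ ∧ ‖z‖ ≤ t} := by
  have hrk : 1 < Module.rank ℝ (EuclideanSpace ℝ (Fin n)) := by
    rw [← Module.finrank_eq_rank, finrank_euclideanSpace_fin]
    exact_mod_cast (by omega : 1 < n)
  have e : {z : EuclideanSpace ℝ (Fin n) | s ≤ ‖z‖ ∧ ‖z‖ ≤ t} =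
      (fun q : ℝ × EuclideanSpace ℝ (Fin n) => q.1 • q.2) '' (Icc s t ×ˢ sphere 0 1) := by
    ext z
    constructor
    · rintro ⟨h1, h2⟩
      have h3 : ‖z‖ ≠ 0 := by linarith
      refine ⟨(‖z‖, ‖z‖⁻¹ • z), ⟨⟨h1, h2⟩, ?_⟩, ?_⟩
      · simp [norm_smul, h3]
      · simp [smul_smul, h3]
    · rintro ⟨⟨a, w⟩, ⟨⟨h1, h2⟩, h3⟩, rfl⟩
      simp only [mem_sphere_zero_iff_norm] at h3 h1 h2
      have : 0 < a := by linarith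
      simp [norm_smul, h3, abs_of_pos this, h1, h2]
  rw [e]
  constructor
  · exact (isCompact_Icc.prod (isCompact_sphere _ _)).image (by fun_prop)
  · exact (isPreconnected_Icc.prod (isConnected_sphere hrk 0 zero_le_one).isPreconnected).image _
      (by fun_prop)

theorem gl_compare {n : ℕ} (hn : 0 < n) {A U : Set (EuclideanSpace ℝ (Fin n))} (hA : IsOpen A)
    (hAb : Bornology.IsBounded A) {H : EuclideanSpace ℝ (Fin n) → ℝ} {x : EuclideanSpace ℝ (Fin n)}
    (hc : ContinuousOn H (closure A)) (hd : ContDiffOn ℝ 2 H A) (hl : ∀ y ∈ A, lap H y = 0)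
    (hU : IsOpen U) (hUA : U ⊆ A) (hx : ∀ y ∈ closure U, x ≠ y) {z : EuclideanSpace ℝ (Fin n)}
    (hz : ∀ y ∈ closure U, z ≠ y) (α β : ℝ)
    (hb : ∀ y ∈ closure U, y ∉ U →
      α * ‖z - y‖ ^ ((2:ℝ) - n) - β ≤ ‖x - y‖ ^ ((2:ℝ) - n) - H y) :
    ∀ y ∈ U, α * ‖z - y‖ ^ ((2:ℝ) - n) - β ≤ ‖x - y‖ ^ ((2:ℝ) - n) - H y := by
  have hcont : ∀ w : EuclideanSpace ℝ (Fin n), (∀ y ∈ closure U, w ≠ y) →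
      ContinuousOn (fun y => ‖w - y‖ ^ ((2:ℝ) - n)) (closure U) := fun w hw y hy =>
    (gl_fund_contDiff _ (hw y hy)).continuousAt.continuousWithinAt
  have hHd : ∀ y ∈ U, ContDiffAt ℝ 2 H y := fun y hy =>
    hd.contDiffAt (hA.mem_nhds (hUA hy))
  have key := gl_min_principle hn hU (hAb.subset hUA)
    (u := fun y => (‖x - y‖ ^ ((2:ℝ) - n) - H y) - (α * ‖z - y‖ ^ ((2:ℝ) - n) - β))
    (((hcont x hx).sub (hc.mono (closure_mono hUA))).sub
      ((continuousOn_const.mul (hcont z hz)).sub continuousOn_const))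
    (fun y hy => by
      have h1 := gl_fund_contDiff ((2:ℝ) - n) (hx y (subset_closure hy))
      have h2 := gl_fund_contDiff ((2:ℝ) - n) (hz y (subset_closure hy))
      exact (h1.sub (hHd y hy)).sub ((contDiffAt_const.mul h2).sub contDiffAt_const))
    (fun y hy => by
      have h1 := gl_fund_contDiff ((2:ℝ) - n) (hx y (subset_closure hy))
      have h2 := gl_fund_contDiff ((2:ℝ) - n) (hz y (subset_closure hy))
      have h3 : ContDiffAt ℝ 2 (fun y => α * ‖z - y‖ ^ ((2:ℝ) - n)) y := contDiffAt_const.mul h2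
      rw [gl_lap_sub (h1.sub (hHd y hy)) (h3.sub contDiffAt_const),
        gl_lap_sub h1 (hHd y hy), gl_lap_sub h3 contDiffAt_const, gl_lap_const_mul h2,
        gl_lap_const, gl_fund_lap (hx y (subset_closure hy)),
        gl_fund_lap (hz y (subset_closure hy)), hl y (hUA hy)]
      ring)
    (fun y hy hyU => sub_nonneg.mpr (hb y hy hyU))
  exact fun y hy => sub_nonneg.mp (key y hy)

theorem gl_anti {n : ℕ} (hn : 3 ≤ n) {a b : ℝ} (ha : 0 < a) (hab : a ≤ b) :
    b ^ ((2:ℝ) - n) ≤ a ^ ((2:ℝ) - n) := by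
  have : (3:ℝ) ≤ n := by exact_mod_cast hn
  exact Real.rpow_le_rpow_of_nonpos ha hab (by linarith)

theorem gl_anti_lt {n : ℕ} (hn : 3 ≤ n) {a b : ℝ} (ha : 0 < a) (hab : a < b) :
    b ^ ((2:ℝ) - n) < a ^ ((2:ℝ) - n) := by
  have : (3:ℝ) ≤ n := by exact_mod_cast hn
  exact Real.rpow_lt_rpow_of_neg ha hab (by linarith)

/-- Lower bound near the pole, and positivity. -/
theorem gl_near {n : ℕ} (hn : 3 ≤ n) {A : Set (EuclideanSpace ℝ (Fin n))} (hA : IsOpen A)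
    (hAb : Bornology.IsBounded A) {H : EuclideanSpace ℝ (Fin n) → ℝ} {x : EuclideanSpace ℝ (Fin n)}
    (hc : ContinuousOn H (closure A)) (hd : ContDiffOn ℝ 2 H A) (hl : ∀ y ∈ A, lap H y = 0)
    (hb : ∀ y ∈ closure A, y ∉ A → H y = ‖x - y‖ ^ ((2:ℝ) - n))
    {d : ℝ} (hd0 : 0 < d) (hdist : ∀ y ∈ closure A, y ∉ A → d ≤ ‖x - y‖) :
    (∀ y ∈ A, x ≠ y → ‖x - y‖ ≤ d / 2 →
      (d / 2) ^ ((2:ℝ) - n) - d ^ ((2:ℝ) - n) ≤ ‖x - y‖ ^ ((2:ℝ) - n) - H y) ∧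
    (∀ y ∈ closure A, x ≠ y → 0 ≤ ‖x - y‖ ^ ((2:ℝ) - n) - H y) := by
  have h1 : ∀ y ∈ A, H y ≤ d ^ ((2:ℝ) - n) := by
    have := gl_min_principle (by omega) hA hAb (u := fun y => d ^ ((2:ℝ) - n) - H y)
      (continuousOn_const.sub hc)
      (fun y hy => contDiffAt_const.sub (hd.contDiffAt (hA.mem_nhds hy)))
      (fun y hy => by
        rw [gl_lap_sub contDiffAt_const (hd.contDiffAt (hA.mem_nhds hy)), gl_lap_const, hl y hy]
        simp)
      (fun y hy hyA => by
        rw [hb y hy hyA]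
        exact sub_nonneg.mpr (gl_anti hn hd0 (hdist y hy hyA)))
    exact fun y hy => sub_nonneg.mp (this y hy)
  have h2 : ∀ y ∈ A, x ≠ y → ‖x - y‖ ≤ d / 2 →
      (d / 2) ^ ((2:ℝ) - n) - d ^ ((2:ℝ) - n) ≤ ‖x - y‖ ^ ((2:ℝ) - n) - H y := by
    intro y hy hxy hle
    have h3 := gl_anti hn (norm_pos_iff.mpr (sub_ne_zero.mpr hxy)) hle
    have h4 := h1 y hy
    linarith
  refine ⟨h2, fun y hy hxy => ?_⟩
  have hc0 : d ^ ((2:ℝ) - n) < (d / 2) ^ ((2:ℝ) - n) := gl_anti_lt hn (by linarith) (by linarith)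
  by_cases hyA : y ∈ A
  swap
  · rw [hb y hy hyA]; simp
  by_cases hyd : ‖x - y‖ ≤ d / 2
  · have := h2 y hyA hxy hyd
    linarith
  push Not at hyd
  have hcl : ∀ y ∈ closure (A \ closedBall x (d / 2)), d / 2 ≤ ‖x - y‖ := by
    have : closure (A \ closedBall x (d / 2)) ⊆ {y | d / 2 ≤ ‖x - y‖} := by
      refine closure_minimal ?_ (isClosed_le continuous_const (by fun_prop))
      rintro w ⟨-, hw⟩
      rw [mem_closedBall', dist_eq_norm, not_le] at hw
      exact hw.le
    exact this
  have hne : ∀ y ∈ closure (A \ closedBall x (d / 2)), x ≠ y := by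
    rintro w hw rfl
    have := hcl _ hw
    simp at this
    linarith
  have := gl_compare (by omega) hA hAb hc hd hl (hA.sdiff isClosed_closedBall) sdiff_subset
    hne hne 0 0 (fun w hw hwU => by
      simp only [zero_mul, sub_zero]
      by_cases hwA : w ∈ A
      · have h5 : ‖x - w‖ ≤ d / 2 := by
          by_contra h6
          refine hwU ⟨hwA, ?_⟩
          rwa [mem_closedBall', dist_eq_norm]
        have := h2 w hwA (hne w hw) h5
        linarith
      · rw [hb w (closure_mono sdiff_subset hw) hwA]; simp) y
    ⟨hyA, by rw [mem_closedBall', dist_eq_norm, not_le]; exact hyd⟩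
  simpa using this

theorem gl_step {n : ℕ} (hn : 3 ≤ n) {A : Set (EuclideanSpace ℝ (Fin n))} (hA : IsOpen A)
    (hAb : Bornology.IsBounded A) {H : EuclideanSpace ℝ (Fin n) → ℝ} {x : EuclideanSpace ℝ (Fin n)}
    (hc : ContinuousOn H (closure A)) (hd : ContDiffOn ℝ 2 H A) (hl : ∀ y ∈ A, lap H y = 0)
    {δ c₀ : ℝ} (hδ : 0 < δ)
    (hnear : ∀ y ∈ A, x ≠ y → ‖x - y‖ ≤ δ → c₀ ≤ ‖x - y‖ ^ ((2:ℝ) - n) - H y)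
    (hpos : ∀ y ∈ closure A, x ≠ y → 0 ≤ ‖x - y‖ ^ ((2:ℝ) - n) - H y)
    {R κ : ℝ} (hR : 0 < R) (hκ : κ = ((R / 2) ^ ((2:ℝ) - n) - R ^ ((2:ℝ) - n)) /
      ((R / 4) ^ ((2:ℝ) - n) - R ^ ((2:ℝ) - n)))
    {z : EuclideanSpace ℝ (Fin n)} (hz : closedBall z R ⊆ A) {c : ℝ} (hc0 : 0 ≤ c) (hcc : c ≤ c₀)
    (hP : ∀ y, ‖z - y‖ ≤ R / 4 → x ≠ y → c ≤ ‖x - y‖ ^ ((2:ℝ) - n) - H y) :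
    ∀ y, ‖z - y‖ ≤ R / 2 → x ≠ y → κ * c ≤ ‖x - y‖ ^ ((2:ℝ) - n) - H y := by
  have hD : 0 < (R / 4) ^ ((2:ℝ) - n) - R ^ ((2:ℝ) - n) :=
    sub_pos.mpr (gl_anti_lt hn (by linarith) (by linarith))
  have h24 : (R / 2) ^ ((2:ℝ) - n) ≤ (R / 4) ^ ((2:ℝ) - n) := gl_anti hn (by linarith) (by linarith)
  set D := (R / 4) ^ ((2:ℝ) - n) - R ^ ((2:ℝ) - n) with hDdef
  have hκ1 : κ ≤ 1 := by
    rw [hκ, div_le_one hD]; linarith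
  have hbar : ∀ s : ℝ, c / D * s - c / D * R ^ ((2:ℝ) - n) = c * ((s - R ^ ((2:ℝ) - n)) / D) := by
    intro s; field_simp
  intro y hy hxy
  have hκc : κ * c ≤ c := by nlinarith
  by_cases hy4 : ‖z - y‖ ≤ R / 4
  · exact hκc.trans (hP y hy4 hxy)
  have hyA : y ∈ A := hz (by rw [mem_closedBall', dist_eq_norm]; linarith)
  by_cases hyx : ‖x - y‖ ≤ δ
  · exact (hκc.trans hcc).trans (hnear y hyA hxy hyx)
  push Not at hy4 hyx
  set U : Set (EuclideanSpace ℝ (Fin n)) := {w | ‖z - w‖ < R ∧ R / 4 < ‖z - w‖ ∧ δ < ‖x - w‖}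
  have hUo : IsOpen U := by
    simp only [U, setOf_and]
    refine (isOpen_lt ?_ ?_).inter ((isOpen_lt ?_ ?_).inter (isOpen_lt ?_ ?_)) <;> fun_prop
  have hUA : U ⊆ A := fun w hw => hz (by rw [mem_closedBall', dist_eq_norm]; exact hw.1.le)
  have hcl : closure U ⊆ {w | ‖z - w‖ ≤ R ∧ R / 4 ≤ ‖z - w‖ ∧ δ ≤ ‖x - w‖} := by
    refine closure_minimal (fun w hw => ⟨hw.1.le, hw.2.1.le, hw.2.2.le⟩) ?_
    simp only [setOf_and]
    refine (isClosed_le ?_ ?_).inter ((isClosed_le ?_ ?_).inter (isClosed_le ?_ ?_)) <;> fun_prop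
  have hxne : ∀ w ∈ closure U, x ≠ w := by
    rintro w hw rfl
    have := (hcl hw).2.2
    simp at this
    linarith
  have hzne : ∀ w ∈ closure U, z ≠ w := by
    rintro w hw rfl
    have := (hcl hw).2.1
    simp at this
    linarith
  have := gl_compare (by omega) hA hAb hc hd hl hUo hUA hxne hzne (c / D)
    (c / D * R ^ ((2:ℝ) - n)) (fun w hw hwU => by
      obtain ⟨g1, g2, g3⟩ := hcl hw
      rw [hbar]
      have hle : c * ((‖z - w‖ ^ ((2:ℝ) - n) - R ^ ((2:ℝ) - n)) / D) ≤ c := by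
        have : (‖z - w‖ ^ ((2:ℝ) - n) - R ^ ((2:ℝ) - n)) / D ≤ 1 := by
          rw [div_le_one hD]
          have := gl_anti hn (by linarith) g2
          linarith
        nlinarith
      by_cases k1 : ‖z - w‖ < R
      · by_cases k2 : R / 4 < ‖z - w‖
        · have k3 : ‖x - w‖ ≤ δ := by
            by_contra k4
            exact hwU ⟨k1, k2, not_le.mp k4⟩
          have hwA : w ∈ A := hz (by rw [mem_closedBall', dist_eq_norm]; exact g1)
          exact (hle.trans hcc).trans (hnear w hwA (hxne w hw) k3)
        · exact hle.trans (hP w (not_lt.mp k2) (hxne w hw))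
      · have k5 : ‖z - w‖ = R := le_antisymm g1 (not_lt.mp k1)
        rw [k5]
        simpa using hpos w (closure_mono hUA hw) (hxne w hw)) y
    ⟨by linarith, hy4, hyx⟩
  rw [hbar] at this
  refine le_trans ?_ this
  rw [hκ, mul_comm]
  have := gl_anti hn (by linarith : 0 < ‖z - y‖) hy
  gcongr

theorem gl_chain_bound {n : ℕ} (hn : 3 ≤ n) {A K : Set (EuclideanSpace ℝ (Fin n))} (hA : IsOpen A)
    (hAb : Bornology.IsBounded A) {H : EuclideanSpace ℝ (Fin n) → ℝ} {x : EuclideanSpace ℝ (Fin n)}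
    (hc : ContinuousOn H (closure A)) (hd : ContDiffOn ℝ 2 H A) (hl : ∀ y ∈ A, lap H y = 0)
    {δ c₀ : ℝ} (hδ : 0 < δ) (hc₀ : 0 < c₀)
    (hnear : ∀ y ∈ A, x ≠ y → ‖x - y‖ ≤ δ → c₀ ≤ ‖x - y‖ ^ ((2:ℝ) - n) - H y)
    (hpos : ∀ y ∈ closure A, x ≠ y → 0 ≤ ‖x - y‖ ^ ((2:ℝ) - n) - H y)
    {R κ : ℝ} (hR : 0 < R) (hκ : κ = ((R / 2) ^ ((2:ℝ) - n) - R ^ ((2:ℝ) - n)) /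
      ((R / 4) ^ ((2:ℝ) - n) - R ^ ((2:ℝ) - n))) (hκ0 : 0 < κ) (hκ1 : κ ≤ 1)
    (hRδ : R / 4 ≤ δ) (hK : ∀ z ∈ K, closedBall z R ⊆ A) (hxK : x ∈ K) :
    ∀ k, ∀ z ∈ glReach K (R / 4) x k, ∀ y, ‖z - y‖ ≤ R / 4 → x ≠ y →
      κ ^ k * c₀ ≤ ‖x - y‖ ^ ((2:ℝ) - n) - H y := by
  intro k
  induction k with
  | zero =>
    intro z hz y hy hxy
    rw [glReach, mem_singleton_iff] at hz
    subst hz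
    rw [pow_zero, one_mul]
    refine hnear y (hK _ hxK ?_) hxy (hy.trans hRδ)
    rw [mem_closedBall', dist_eq_norm]; linarith
  | succ k ih =>
    rintro w ⟨hwK, z, hz, hzw⟩ y hy hxy
    have hzK := gl_reach_sub hxK k hz
    have := gl_step hn hA hAb hc hd hl hδ hnear hpos hR hκ (hK z hzK)
      (c := κ ^ k * c₀) (by positivity)
      (mul_le_of_le_one_left hc₀.le (pow_le_one₀ hκ0.le hκ1)) (ih z hz) y (by
        have := norm_sub_le_norm_sub_add_norm_sub z w y
        rw [dist_eq_norm] at hzw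
        linarith) hxy
    calc κ ^ (k + 1) * c₀ = κ * (κ ^ k * c₀) := by ring
      _ ≤ _ := this

theorem gl_pow_eq {n : ℕ} (hn : 3 ≤ n) {s : ℝ} (hs : 0 ≤ s) :
    s ^ ((2:ℝ) - n) = (s ^ (n - 2))⁻¹ := by
  rw [← Real.rpow_natCast, Nat.cast_sub (by omega), ← Real.rpow_neg hs]
  congr 1
  push_cast; ring

theorem gl_inner {n : ℕ} (hn : 3 ≤ n) {A : Set (EuclideanSpace ℝ (Fin n))} (hA : IsOpen A)
    (hAb : Bornology.IsBounded A) {H : EuclideanSpace ℝ (Fin n) → ℝ} {x : EuclideanSpace ℝ (Fin n)}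
    (hc : ContinuousOn H (closure A)) (hd : ContDiffOn ℝ 2 H A) (hl : ∀ y ∈ A, lap H y = 0)
    (hpos : ∀ y ∈ closure A, x ≠ y → 0 ≤ ‖x - y‖ ^ ((2:ℝ) - n) - H y)
    {ρ ρ₀ c : ℝ} (hρ : 0 < ρ) (hρ₀ : ρ < ρ₀) (hx : ρ₀ < ‖x‖) (hc0 : 0 ≤ c)
    (hAs : ∀ y, ρ < ‖y‖ → ‖y‖ ≤ ρ₀ → y ∈ A)
    (hs : ∀ y, ‖y‖ = ρ₀ → c ≤ ‖x - y‖ ^ ((2:ℝ) - n) - H y) :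
    ∀ y, ρ ≤ ‖y‖ → ‖y‖ ≤ ρ₀ →
      c * (1 - ρ ^ (n - 2) / ‖y‖ ^ (n - 2)) ≤ ‖x - y‖ ^ ((2:ℝ) - n) - H y := by
  have hxne : ∀ y, ‖y‖ ≤ ρ₀ → x ≠ y := by
    rintro y hy rfl
    linarith
  have hbd : ∀ y, ‖y‖ = ρ → c * (1 - ρ ^ (n - 2) / ‖y‖ ^ (n - 2)) ≤
      ‖x - y‖ ^ ((2:ℝ) - n) - H y := by
    intro y hy
    rw [hy, div_self (pow_pos hρ _).ne', sub_self, mul_zero]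
    refine hpos y ?_ (hxne y (by linarith))
    have ht : Filter.Tendsto (fun t : ℝ => t • y) (nhdsWithin 1 (Ioi 1)) (nhds y) := by
      have : ContinuousAt (fun t : ℝ => t • y) 1 := by fun_prop
      have h2 := this.tendsto
      rw [one_smul] at h2
      exact h2.mono_left nhdsWithin_le_nhds
    refine mem_closure_of_tendsto ht ?_
    have h1 : (1:ℝ) < ρ₀ / ρ := by rwa [one_lt_div hρ]
    filter_upwards [Ioo_mem_nhdsGT h1] with t ht
    have hn1 : ‖t • y‖ = t * ρ := by
      rw [norm_smul, hy, Real.norm_of_nonneg (by linarith [ht.1])]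
    refine hAs _ ?_ ?_
    · rw [hn1]; nlinarith [ht.1]
    · rw [hn1]; exact ((lt_div_iff₀ hρ).mp ht.2).le
  have hbd2 : ∀ y, ‖y‖ = ρ₀ → c * (1 - ρ ^ (n - 2) / ‖y‖ ^ (n - 2)) ≤
      ‖x - y‖ ^ ((2:ℝ) - n) - H y := by
    intro y hy
    refine le_trans ?_ (hs y hy)
    have : 0 ≤ ρ ^ (n - 2) / ‖y‖ ^ (n - 2) := by positivity
    nlinarith
  intro y hy1 hy2
  rcases hy1.eq_or_lt with h | h1
  · exact hbd y h.symm
  rcases hy2.eq_or_lt with h | h2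
  · exact hbd2 y h
  have hbar : ∀ w : EuclideanSpace ℝ (Fin n), (-(c * ρ ^ (n - 2))) * ‖0 - w‖ ^ ((2:ℝ) - n) - (-c) =
      c * (1 - ρ ^ (n - 2) / ‖w‖ ^ (n - 2)) := by
    intro w
    rw [zero_sub, norm_neg, gl_pow_eq hn (norm_nonneg _)]
    ring
  set U : Set (EuclideanSpace ℝ (Fin n)) := {w | ρ < ‖w‖ ∧ ‖w‖ < ρ₀}
  have hUo : IsOpen U := by
    simp only [U, setOf_and]
    refine (isOpen_lt ?_ ?_).inter (isOpen_lt ?_ ?_) <;> fun_prop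
  have hcl : closure U ⊆ {w | ρ ≤ ‖w‖ ∧ ‖w‖ ≤ ρ₀} := by
    refine closure_minimal (fun w hw => ⟨hw.1.le, hw.2.le⟩) ?_
    simp only [setOf_and]
    refine (isClosed_le ?_ ?_).inter (isClosed_le ?_ ?_) <;> fun_prop
  have := gl_compare (by omega) hA hAb hc hd hl hUo (fun w hw => hAs w hw.1 hw.2.le)
    (fun w hw => hxne w (hcl hw).2) (z := 0) (by
      rintro w hw rfl
      have := (hcl hw).1
      simp at this
      linarith) (-(c * ρ ^ (n - 2))) (-c) (fun w hw hwU => by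
      rw [hbar]
      obtain ⟨g1, g2⟩ := hcl hw
      rcases g1.eq_or_lt with h | h1
      · exact hbd w h.symm
      rcases g2.eq_or_lt with h | h2
      · exact hbd2 w h
      exact absurd ⟨h1, h2⟩ hwU) y ⟨h1, h2⟩
  rwa [hbar] at this

/-- uniform lower bound for the Green's function of the annulus
`B_1 \ B_ρ`, independent of the inner radius `ρ`. -/
theorem green_function_lower_bound (n : ℕ) (hn : 3 ≤ n) (ρ₀ ρ₁ ρ₂ : ℝ)
    (h0 : 0 < ρ₀) (h01 : ρ₀ < ρ₁) (h12 : ρ₁ < ρ₂) (h21 : ρ₂ < 1) :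
    ∃ C : ℝ, 1 < C ∧ ∃ C' : ℝ, 1 < C' ∧
      ∀ ρ : ℝ, 0 < ρ → 2 * ρ < ρ₀ →
        ∀ h G : EuclideanSpace ℝ (Fin n) → EuclideanSpace ℝ (Fin n) → ℝ,
          (∀ x ∈ (ball (0 : EuclideanSpace ℝ (Fin n)) 1 \ closedBall 0 ρ),
            ContinuousOn (h x)
              (closure (ball (0 : EuclideanSpace ℝ (Fin n)) 1 \ closedBall 0 ρ)) ∧
            ContDiffOn ℝ 2 (h x) (ball (0 : EuclideanSpace ℝ (Fin n)) 1 \ closedBall 0 ρ) ∧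
            (∀ y ∈ (ball (0 : EuclideanSpace ℝ (Fin n)) 1 \ closedBall 0 ρ),
              lap (h x) y = 0) ∧
            (∀ y ∈ frontier (ball (0 : EuclideanSpace ℝ (Fin n)) 1 \ closedBall 0 ρ),
              h x y = ‖x - y‖ ^ ((2 : ℝ) - n))) →
          (∀ x y : EuclideanSpace ℝ (Fin n), G x y =
            (1 / ((n : ℝ) * ((n : ℝ) - 2) *
              (volume (ball (0 : EuclideanSpace ℝ (Fin n)) 1)).toReal)) *
              (‖x - y‖ ^ ((2 : ℝ) - n) - h x y)) →
          (∀ x y : EuclideanSpace ℝ (Fin n),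
              ρ ≤ ‖y‖ → ‖y‖ ≤ ρ₀ → ρ₁ ≤ ‖x‖ → ‖x‖ ≤ ρ₂ →
                (1 / C) * (1 - ρ ^ (n - 2) / ‖y‖ ^ (n - 2)) ≤ G x y) ∧
          (∀ x y : EuclideanSpace ℝ (Fin n),
              2 * ρ ≤ ‖y‖ → ‖y‖ ≤ ρ₀ → ρ₁ ≤ ‖x‖ → ‖x‖ ≤ ρ₂ →
                1 / C' ≤ G x y) := by
  have hn3 : (3:ℝ) ≤ n := by exact_mod_cast hn
  obtain ⟨d, hd⟩ : ∃ d, d = min (1 - ρ₂) (ρ₁ - ρ₀) := ⟨_, rfl⟩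
  have hd0 : 0 < d := by rw [hd]; exact lt_min (by linarith) (by linarith)
  have hda : d ≤ 1 - ρ₂ := hd ▸ min_le_left _ _
  have hdb : d ≤ ρ₁ - ρ₀ := hd ▸ min_le_right _ _
  obtain ⟨R, hRdef⟩ : ∃ R, R = min d ρ₀ / 2 := ⟨_, rfl⟩
  have hR : 0 < R := by rw [hRdef]; exact half_pos (lt_min hd0 h0)
  have hRd : R ≤ d / 2 := by
    rw [hRdef]; have := min_le_left d ρ₀; linarith
  have hRρ : R ≤ ρ₀ / 2 := by
    rw [hRdef]; have := min_le_right d ρ₀; linarith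
  obtain ⟨c₀, hc₀def⟩ : ∃ c, c = (d / 2) ^ ((2:ℝ) - n) - d ^ ((2:ℝ) - n) := ⟨_, rfl⟩
  have hc₀ : 0 < c₀ := by
    rw [hc₀def]; exact sub_pos.mpr (gl_anti_lt hn (by linarith) (by linarith))
  obtain ⟨κ, hκ⟩ : ∃ κ, κ = ((R / 2) ^ ((2:ℝ) - n) - R ^ ((2:ℝ) - n)) /
      ((R / 4) ^ ((2:ℝ) - n) - R ^ ((2:ℝ) - n)) := ⟨_, rfl⟩
  have hκd : 0 < (R / 4) ^ ((2:ℝ) - n) - R ^ ((2:ℝ) - n) :=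
    sub_pos.mpr (gl_anti_lt hn (by linarith) (by linarith))
  have hκ0 : 0 < κ := by
    rw [hκ]
    exact div_pos (sub_pos.mpr (gl_anti_lt hn (by linarith) (by linarith))) hκd
  have hκ1 : κ ≤ 1 := by
    rw [hκ, div_le_one hκd]
    have := gl_anti hn (a := R / 4) (b := R / 2) (by linarith) (by linarith)
    linarith
  obtain ⟨hKc, hKp⟩ := gl_annulus hn (t := ρ₂) h0
  obtain ⟨N, hN⟩ := gl_chain hKc hKp (r := R / 4) (by linarith)
  obtain ⟨k, hk⟩ : ∃ k, k = 1 / ((n : ℝ) * ((n : ℝ) - 2) *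
              (volume (ball (0 : EuclideanSpace ℝ (Fin n)) 1)).toReal) := ⟨_, rfl⟩
  have hk0 : 0 < k := by
    have hv : 0 < (volume (ball (0 : EuclideanSpace ℝ (Fin n)) 1)).toReal :=
      ENNReal.toReal_pos (measure_ball_pos _ _ one_pos).ne' measure_ball_lt_top.ne
    rw [hk]
    refine one_div_pos.mpr (mul_pos (mul_pos ?_ ?_) hv) <;> linarith
  obtain ⟨c, hcdef⟩ : ∃ c, c = κ ^ N * c₀ := ⟨_, rfl⟩
  have hc : 0 < c := by rw [hcdef]; positivity
  have hkc : 0 < k * c := mul_pos hk0 hc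
  obtain ⟨C, hC⟩ : ∃ C, C = 1 / (k * c) + 1 := ⟨_, rfl⟩
  have hC1 : 1 < C := by rw [hC]; have := one_div_pos.mpr hkc; linarith
  have hCk : 1 / C ≤ k * c := by
    rw [div_le_iff₀ (by linarith), hC, mul_add, mul_one_div_cancel hkc.ne']
    linarith
  refine ⟨C, hC1, 2 * C, by linarith, ?_⟩
  intro ρ hρ hρ2 h G hh hG
  have main : ∀ x y : EuclideanSpace ℝ (Fin n),
      ρ ≤ ‖y‖ → ‖y‖ ≤ ρ₀ → ρ₁ ≤ ‖x‖ → ‖x‖ ≤ ρ₂ →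
        (1 / C) * (1 - ρ ^ (n - 2) / ‖y‖ ^ (n - 2)) ≤ G x y := by
    intro x y hy1 hy2 hx1 hx2
    set A : Set (EuclideanSpace ℝ (Fin n)) := ball 0 1 \ closedBall 0 ρ with hAdef
    have hmem : ∀ w, w ∈ A ↔ ‖w‖ < 1 ∧ ρ < ‖w‖ := by
      intro w; simp [hAdef]
    have hA : IsOpen A := isOpen_ball.sdiff isClosed_closedBall
    have hAb : Bornology.IsBounded A := isBounded_ball.subset sdiff_subset
    obtain ⟨e1, e2, e3, e4⟩ := hh x ((hmem x).mpr ⟨by linarith, by linarith⟩)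
    have hb : ∀ y ∈ closure A, y ∉ A → h x y = ‖x - y‖ ^ ((2:ℝ) - n) := by
      intro w hw hwA
      refine e4 w ?_
      rw [hA.frontier_eq]
      exact ⟨hw, hwA⟩
    have hcl : closure A ⊆ {w | ‖w‖ ≤ 1 ∧ ρ ≤ ‖w‖} := by
      refine closure_minimal (fun w hw => ?_) ?_
      · have := (hmem w).mp hw
        exact ⟨this.1.le, this.2.le⟩
      · simp only [setOf_and]
        refine (isClosed_le ?_ ?_).inter (isClosed_le ?_ ?_) <;> fun_prop
    have hdist : ∀ y ∈ closure A, y ∉ A → d ≤ ‖x - y‖ := by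
      intro w hw hwA
      obtain ⟨g1, g2⟩ := hcl hw
      rw [hmem, not_and_or, not_lt, not_lt] at hwA
      have t1 := norm_sub_norm_le x w
      have t2 := norm_sub_norm_le w x
      rw [norm_sub_rev] at t2
      rcases hwA with g | g <;> linarith
    obtain ⟨hnear, hpos⟩ := gl_near hn hA hAb e1 e2 e3 hb hd0 hdist
    rw [← hc₀def] at hnear
    have hxK : x ∈ {z : EuclideanSpace ℝ (Fin n) | ρ₀ ≤ ‖z‖ ∧ ‖z‖ ≤ ρ₂} := ⟨by linarith, hx2⟩
    have hchain := gl_chain_bound hn hA hAb e1 e2 e3 (half_pos hd0) hc₀ hnear hpos hR hκ hκ0 hκ1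
      (by linarith) (fun z hz w hw => by
        rw [mem_closedBall', dist_eq_norm] at hw
        obtain ⟨g1, g2⟩ := hz
        have t1 := norm_sub_norm_le z w
        have t2 := norm_sub_norm_le w z
        rw [norm_sub_rev] at t2
        exact (hmem w).mpr ⟨by linarith, by linarith⟩) hxK N
    have hfin := gl_inner hn hA hAb e1 e2 e3 hpos hρ (by linarith) (by linarith : ρ₀ < ‖x‖) hc.le
      (fun w hw1 hw2 => (hmem w).mpr ⟨by linarith, hw1⟩)
      (fun w hw => by
        rw [hcdef]
        refine hchain w (hN x hxK w ⟨hw.ge, by linarith⟩) w (by simp; linarith) ?_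
        rintro rfl
        linarith) y hy1 hy2
    rw [hG, ← hk]
    have hq : 0 ≤ 1 - ρ ^ (n - 2) / ‖y‖ ^ (n - 2) := by
      have : ρ ^ (n - 2) / ‖y‖ ^ (n - 2) ≤ 1 := by
        have : 0 < ‖y‖ := by linarith
        rw [div_le_one (by positivity)]
        gcongr
      linarith
    calc (1 / C) * (1 - ρ ^ (n - 2) / ‖y‖ ^ (n - 2))
        ≤ (k * c) * (1 - ρ ^ (n - 2) / ‖y‖ ^ (n - 2)) := by gcongr
      _ = k * (c * (1 - ρ ^ (n - 2) / ‖y‖ ^ (n - 2))) := by ring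
      _ ≤ _ := by gcongr
  refine ⟨main, ?_⟩
  intro x y hy1 hy2 hx1 hx2
  refine le_trans ?_ (main x y (by linarith) hy2 hx1 hx2)
  have hy0 : 0 < ‖y‖ := by linarith
  have hq : ρ ^ (n - 2) / ‖y‖ ^ (n - 2) ≤ 1 / 2 := by
    rw [← div_pow]
    have hr : ρ / ‖y‖ ≤ 1 / 2 := by rw [div_le_div_iff₀ hy0 two_pos]; linarith
    have hr0 : 0 ≤ ρ / ‖y‖ := by positivity
    exact (pow_le_of_le_one hr0 (by linarith) (by omega)).trans hr
  have hC0 : 0 < 1 / C := by apply one_div_pos.mpr; linarith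
  calc 1 / (2 * C) = 1 / C * (1 / 2) := by rw [one_div_mul_one_div, mul_comm]
    _ ≤ _ := by
      gcongr
      linarith
end

section
/- Let $n \geq 3$ and $0 < 2\rho < \rho_0 < \rho_1 < \rho_2 < 1$. Suppose $\tilde v \in C^2$ satisfies $-\Delta \tilde v = \tilde f \geq 0$ on the annulus $B_1(0) \setminus \bar B_\rho(0)$ and $\tilde v \geq 0$ on the boundary $\partial(B_1 \setminus B_\rho)$. Then there is a constant $C > 1$ depending only on $n, \rho_0, \rho_1, \rho_2$ such that $\inf_{\rho_1 \leq |x| \leq \rho_2} \tilde v(x) \geq \frac{1}{C} \int_{2\rho \leq |y| \leq \rho_0} \tilde f(y)\,dy$. -/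
open Metric Set MeasureTheory

section AnnulusAux

lemma hasDerivAt_max_pow (k : ℕ) (t : ℝ) :
    HasDerivAt (fun t : ℝ => max t 0 ^ (k + 2)) ((k + 2 : ℝ) * max t 0 ^ (k + 1)) t := by
  rcases lt_trichotomy t 0 with ht | ht | ht
  · have h : (fun t : ℝ => max t 0 ^ (k + 2)) =ᶠ[nhds t] fun _ => 0 := by
      filter_upwards [Iio_mem_nhds ht] with s hs
      have : s ≤ 0 := le_of_lt hs
      simp [max_eq_right this]
    rw [max_eq_right ht.le]
    simpa using (hasDerivAt_const t (0 : ℝ)).congr_of_eventuallyEq h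
  · subst ht
    have h : (fun t : ℝ => max t 0 ^ (k + 2)) =O[nhds 0] fun t => ‖t - 0‖ ^ (k + 2) := by
      apply Asymptotics.IsBigO.of_bound 1
      filter_upwards with s
      simp only [norm_pow, sub_zero, one_mul, norm_norm]
      apply pow_le_pow_left₀ (norm_nonneg _)
      rw [Real.norm_eq_abs, Real.norm_eq_abs, abs_of_nonneg (le_max_right _ _)]
      exact max_le (le_abs_self _) (abs_nonneg _)
    have := (h.hasFDerivAt (𝕜 := ℝ) (by omega)).hasDerivAt
    simpa using this
  · have h : (fun t : ℝ => max t 0 ^ (k + 2)) =ᶠ[nhds t] fun t => t ^ (k + 2) := by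
      filter_upwards [Ioi_mem_nhds ht] with s hs
      have : 0 ≤ s := le_of_lt hs
      simp [max_eq_left this]
    rw [max_eq_left ht.le]
    have := (hasDerivAt_pow (k + 2) t).congr_of_eventuallyEq h
    simpa using this

lemma contDiff_max_cube : ContDiff ℝ 2 (fun t : ℝ => max t 0 ^ 3) := by
  have h1 : deriv (fun t : ℝ => max t 0 ^ 3) = fun t => 3 * max t 0 ^ 2 := by
    ext t
    have := (hasDerivAt_max_pow 1 t).deriv
    norm_num at this
    exact this
  have h2 : deriv (fun t : ℝ => 3 * max t 0 ^ 2) = fun t => 3 * (2 * max t 0) := by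
    ext t
    have := ((hasDerivAt_max_pow 0 t).const_mul 3).deriv
    norm_num at this
    simpa using this
  rw [show (2 : WithTop ℕ∞) = 1 + 1 by norm_num, contDiff_succ_iff_deriv]
  refine ⟨fun t => (hasDerivAt_max_pow 1 t).differentiableAt, by simp, ?_⟩
  rw [h1, contDiff_one_iff_deriv]
  refine ⟨fun t => ((hasDerivAt_max_pow 0 t).const_mul 3).differentiableAt, ?_⟩
  rw [h2]
  fun_prop

variable {n : ℕ}

local notation "𝔼" n => EuclideanSpace ℝ (Fin n)

lemma hasFDerivAt_normsq (y : 𝔼 n) :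
    HasFDerivAt (fun y : 𝔼 n => ‖y‖ ^ 2) (2 • innerSL ℝ y) y :=
  (hasStrictFDerivAt_norm_sq y).hasFDerivAt

lemma fderiv_radial {G G1 : ℝ → ℝ} (h1 : ∀ q, 0 ≤ q → HasDerivAt G (G1 q) q) (y : 𝔼 n)
    (i : Fin n) :
    fderiv ℝ (fun y : 𝔼 n => G (‖y‖ ^ 2)) y (EuclideanSpace.single i 1)
      = G1 (‖y‖ ^ 2) * (2 * y i) := by
  have := (h1 (‖y‖ ^ 2) (by positivity)).comp_hasFDerivAt y (hasFDerivAt_normsq y)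
  rw [HasFDerivAt.fderiv (f := fun y : 𝔼 n => G (‖y‖ ^ 2)) this]
  simp [EuclideanSpace.inner_single_right]

lemma lap_radial {G G1 G2 : ℝ → ℝ} (h1 : ∀ q, 0 ≤ q → HasDerivAt G (G1 q) q)
    (h2 : ∀ q, 0 ≤ q → HasDerivAt G1 (G2 q) q) (y : 𝔼 n) :
    lap (fun y : 𝔼 n => G (‖y‖ ^ 2)) y
      = 4 * ‖y‖ ^ 2 * G2 (‖y‖ ^ 2) + 2 * n * G1 (‖y‖ ^ 2) := by
  unfold lap
  have key : ∀ i : Fin n, fderiv ℝ (fun y => fderiv ℝ (fun y : 𝔼 n => G (‖y‖ ^ 2)) y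
      (EuclideanSpace.single i 1)) y (EuclideanSpace.single i 1)
      = G2 (‖y‖ ^ 2) * 4 * (y i) ^ 2 + 2 * G1 (‖y‖ ^ 2) := by
    intro i
    simp_rw [fderiv_radial h1]
    have ha := (h2 (‖y‖ ^ 2) (by positivity)).comp_hasFDerivAt y (hasFDerivAt_normsq y)
    have hb : HasFDerivAt (fun y : 𝔼 n => 2 * y i)
        ((2 : ℝ) • (EuclideanSpace.proj i : (𝔼 n) →L[ℝ] ℝ)) y :=
      ((EuclideanSpace.proj i : (𝔼 n) →L[ℝ] ℝ).hasFDerivAt).const_mul 2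
    have hc := ha.mul hb
    rw [HasFDerivAt.fderiv (f := fun y : 𝔼 n => G1 (‖y‖ ^ 2) * (2 * y i)) hc]
    simp [EuclideanSpace.inner_single_right]
    ring
  rw [Finset.sum_congr rfl (fun i _ => key i), Finset.sum_add_distrib, ← Finset.mul_sum,
    EuclideanSpace.norm_sq_eq]
  simp
  ring

lemma partial_contDiff {u : (𝔼 n) → ℝ} (hu : ContDiff ℝ 2 u) (e : 𝔼 n) :
    ContDiff ℝ 1 (fun y => fderiv ℝ u y e) :=
  (hu.fderiv_right (m := 1) (by norm_num)).clm_apply contDiff_const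

lemma partial2_cont {u : (𝔼 n) → ℝ} (hu : ContDiff ℝ 2 u) (e : 𝔼 n) :
    Continuous (fun x => fderiv ℝ (fun y => fderiv ℝ u y e) x e) :=
  ((partial_contDiff hu e).continuous_fderiv (by norm_num)).clm_apply continuous_const

lemma lap_cont {u : (𝔼 n) → ℝ} (hu : ContDiff ℝ 2 u) : Continuous (lap u) := by
  unfold lap
  exact continuous_finsetSum _ fun i _ => partial2_cont hu _

/-- one integration by parts -/
lemma ibp1 {a b : (𝔼 n) → ℝ} (ha : ContDiff ℝ 1 a) (hb : ContDiff ℝ 1 b)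
    (hc : HasCompactSupport a) (e : 𝔼 n) :
    ∫ x, a x * fderiv ℝ b x e = - ∫ x, fderiv ℝ a x e * b x := by
  have hac : Continuous (fun x => fderiv ℝ a x e) :=
    (ha.continuous_fderiv (by norm_num)).clm_apply continuous_const
  have hbc : Continuous (fun x => fderiv ℝ b x e) :=
    (hb.continuous_fderiv (by norm_num)).clm_apply continuous_const
  have hsa : HasCompactSupport (fun x => fderiv ℝ a x e) := hc.fderiv_apply (𝕜 := ℝ) e
  apply integral_mul_fderiv_eq_neg_fderiv_mul_of_integrable
  · exact (hac.mul hb.continuous).integrable_of_hasCompactSupport hsa.mul_right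
  · exact (ha.continuous.mul hbc).integrable_of_hasCompactSupport hc.mul_right
  · exact (ha.continuous.mul hb.continuous).integrable_of_hasCompactSupport hc.mul_right
  · exact fun x _ => hb.differentiable (by norm_num) x |> fun _ => ha.differentiable (by norm_num) x
  · exact fun x _ => hb.differentiable (by norm_num) x

lemma green {φ u : (𝔼 n) → ℝ} (hφ : ContDiff ℝ 2 φ) (hu : ContDiff ℝ 2 u)
    (hc : HasCompactSupport φ) :
    ∫ x, φ x * lap u x = ∫ x, lap φ x * u x := by
  unfold lap
  simp_rw [Finset.mul_sum, Finset.sum_mul]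
  rw [integral_finsetSum, integral_finsetSum]
  · refine Finset.sum_congr rfl fun i _ => ?_
    rw [ibp1 (hφ.of_le (by norm_num)) (partial_contDiff hu _) hc]
    rw [ibp1 (partial_contDiff hφ _) (hu.of_le (by norm_num)) (hc.fderiv_apply (𝕜 := ℝ) _)]
    simp
  · intro i _
    exact ((partial2_cont hφ _).mul hu.continuous).integrable_of_hasCompactSupport
      (((hc.fderiv_apply (𝕜 := ℝ) _).fderiv_apply (𝕜 := ℝ) _).mul_right)
  · intro i _
    exact (hφ.continuous.mul (partial2_cont hu _)).integrable_of_hasCompactSupport hc.mul_right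

/-- weight for the mean value inequality -/
noncomputable def etaW (y : 𝔼 n) : ℝ := 6 * max (1 - ‖y‖ ^ 2) 0 ^ 2

/-- potential of the weight -/
noncomputable def psiW (y : 𝔼 n) : ℝ := max (1 - ‖y‖ ^ 2) 0 ^ 3

lemma psiW_contDiff : ContDiff ℝ 2 (psiW : (𝔼 n) → ℝ) :=
  contDiff_max_cube.comp (contDiff_const.sub (contDiff_norm_sq ℝ))

lemma etaW_cont : Continuous (etaW : (𝔼 n) → ℝ) := by
  unfold etaW; fun_prop

lemma etaW_nonneg (y : 𝔼 n) : 0 ≤ etaW y := by unfold etaW; positivity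
lemma psiW_nonneg (y : 𝔼 n) : 0 ≤ psiW y := by
  unfold psiW; exact pow_nonneg (le_max_right _ _) _

lemma max_zero_of_norm {y : 𝔼 n} (h : 1 ≤ ‖y‖) : max (1 - ‖y‖ ^ 2) 0 = 0 :=
  max_eq_right (by nlinarith)

lemma etaW_supp : HasCompactSupport (etaW : (𝔼 n) → ℝ) := by
  apply HasCompactSupport.intro (isCompact_closedBall (0 : 𝔼 n) 1)
  intro y hy
  simp only [mem_closedBall, dist_zero_right, not_le] at hy
  simp [etaW, max_zero_of_norm hy.le]

lemma psiW_supp : HasCompactSupport (psiW : (𝔼 n) → ℝ) := by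
  apply HasCompactSupport.intro (isCompact_closedBall (0 : 𝔼 n) 1)
  intro y hy
  simp only [mem_closedBall, dist_zero_right, not_le] at hy
  simp [psiW, max_zero_of_norm hy.le]

lemma fderiv_psiW (y : 𝔼 n) (i : Fin n) :
    fderiv ℝ psiW y (EuclideanSpace.single i 1) = - (etaW y * y i) := by
  have h1 : ∀ q : ℝ, 0 ≤ q → HasDerivAt (fun q : ℝ => max (1 - q) 0 ^ 3)
      (- (3 * max (1 - q) 0 ^ 2)) q := by
    intro q _
    have := (hasDerivAt_max_pow 1 (1 - q)).comp q ((hasDerivAt_id q).const_sub 1)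
    norm_num at this
    exact this
  have := fderiv_radial h1 y i
  unfold psiW etaW
  rw [this]; ring

lemma apply_eq_sum (L : (𝔼 n) →L[ℝ] ℝ) (y : 𝔼 n) :
    L y = ∑ i, y i * L (EuclideanSpace.single i 1) := by
  conv_lhs => rw [← (EuclideanSpace.basisFun (Fin n) ℝ).sum_repr y]
  simp

lemma deriv_mean_eq {u : (𝔼 n) → ℝ} (hu : ContDiff ℝ 2 u) (x : 𝔼 n) (t : ℝ) :
    ∫ y, etaW y * fderiv ℝ u (x + t • y) y = t * ∫ y, psiW y * lap u (x + t • y) := by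
  have haff : ContDiff ℝ 1 (fun y : 𝔼 n => x + t • y) := by fun_prop
  have hbc : ∀ i : Fin n, ContDiff ℝ 1
      (fun y : 𝔼 n => fderiv ℝ u (x + t • y) (EuclideanSpace.single i 1)) := fun i =>
    (partial_contDiff hu (EuclideanSpace.single i 1)).comp haff
  have hfd : ∀ (i : Fin n) (y : 𝔼 n),
      fderiv ℝ (fun y : 𝔼 n => fderiv ℝ u (x + t • y) (EuclideanSpace.single i 1)) y
        (EuclideanSpace.single i 1)
      = t * fderiv ℝ (fun z => fderiv ℝ u z (EuclideanSpace.single i 1)) (x + t • y)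
        (EuclideanSpace.single i 1) := by
    intro i y
    have h1 : HasFDerivAt (fun y : 𝔼 n => x + t • y) (t • ContinuousLinearMap.id ℝ (𝔼 n)) y :=
      ((hasFDerivAt_id y).const_smul t).const_add x
    have h2 := ((partial_contDiff hu (EuclideanSpace.single i 1)).differentiable
      (by norm_num) (x + t • y)).hasFDerivAt
    have h3 := h2.comp y h1
    rw [HasFDerivAt.fderiv
      (f := fun y : 𝔼 n => fderiv ℝ u (x + t • y) (EuclideanSpace.single i 1)) h3]
    simp
  have step : ∀ i : Fin n, ∫ y : 𝔼 n, etaW y * y i *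
        fderiv ℝ u (x + t • y) (EuclideanSpace.single i 1)
      = ∫ y : 𝔼 n, psiW y * (t * fderiv ℝ (fun z => fderiv ℝ u z (EuclideanSpace.single i 1))
        (x + t • y) (EuclideanSpace.single i 1)) := by
    intro i
    have := ibp1 (psiW_contDiff.of_le (by norm_num)) (hbc i) psiW_supp (EuclideanSpace.single i 1)
    simp_rw [hfd] at this
    rw [this, ← integral_neg]
    congr 1
    ext y
    rw [fderiv_psiW]; ring
  calc ∫ y, etaW y * fderiv ℝ u (x + t • y) y
      = ∫ y : 𝔼 n, ∑ i, etaW y * y i * fderiv ℝ u (x + t • y) (EuclideanSpace.single i 1) := by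
        congr 1
        ext y
        rw [apply_eq_sum, Finset.mul_sum]
        exact Finset.sum_congr rfl fun i _ => by ring
    _ = ∑ i, ∫ y : 𝔼 n, etaW y * y i *
          fderiv ℝ u (x + t • y) (EuclideanSpace.single i 1) := by
        apply integral_finsetSum
        intro i _
        have hc : Continuous (fun y : 𝔼 n => y i) := by fun_prop
        exact ((etaW_cont.mul hc).mul (hbc i).continuous).integrable_of_hasCompactSupport
          (etaW_supp.mul_right.mul_right)
    _ = ∑ i, ∫ y : 𝔼 n, psiW y * (t * fderiv ℝ
          (fun z => fderiv ℝ u z (EuclideanSpace.single i 1))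
          (x + t • y) (EuclideanSpace.single i 1)) := Finset.sum_congr rfl fun i _ => step i
    _ = ∫ y : 𝔼 n, ∑ i, psiW y * (t * fderiv ℝ
          (fun z => fderiv ℝ u z (EuclideanSpace.single i 1))
          (x + t • y) (EuclideanSpace.single i 1)) := by
        symm
        apply integral_finsetSum
        intro i _
        have hc : Continuous (fun y : 𝔼 n => fderiv ℝ
            (fun z => fderiv ℝ u z (EuclideanSpace.single i 1))
            (x + t • y) (EuclideanSpace.single i 1)) :=
          (partial2_cont hu (EuclideanSpace.single i 1)).comp haff.continuous
        exact (psiW_contDiff.continuous.mul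
          (continuous_const.mul hc)).integrable_of_hasCompactSupport psiW_supp.mul_right
    _ = t * ∫ y, psiW y * lap u (x + t • y) := by
        rw [← integral_const_mul]
        congr 1
        ext y
        unfold lap
        rw [Finset.mul_sum, Finset.mul_sum]
        exact Finset.sum_congr rfl fun i _ => by ring

lemma hasDerivAt_mean {u : (𝔼 n) → ℝ} (hu : ContDiff ℝ 2 u) (x : 𝔼 n) (t : ℝ) :
    HasDerivAt (fun t : ℝ => ∫ y, etaW y * u (x + t • y))
      (∫ y, etaW y * fderiv ℝ u (x + t • y) y) t := by
  have hfc : Continuous (fderiv ℝ u) := hu.continuous_fderiv (by norm_num)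
  have hF'c : Continuous (fun p : ℝ × (𝔼 n) => etaW p.2 * fderiv ℝ u (x + p.1 • p.2) p.2) := by
    refine (etaW_cont.comp continuous_snd).mul (Continuous.clm_apply (hfc.comp ?_) continuous_snd)
    fun_prop
  obtain ⟨M, hM⟩ := ((isCompact_closedBall t 1).prod
    (isCompact_closedBall (0 : 𝔼 n) 1)).exists_bound_of_continuousOn hF'c.continuousOn
  have hFc : ∀ s : ℝ, Continuous (fun y : 𝔼 n => etaW y * u (x + s • y)) := fun s =>
    etaW_cont.mul (hu.continuous.comp (by fun_prop))
  refine (hasDerivAt_integral_of_dominated_loc_of_deriv_le (μ := volume)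
    (F := fun t y => etaW y * u (x + t • y))
    (F' := fun t y => etaW y * fderiv ℝ u (x + t • y) y)
    (bound := (closedBall (0 : 𝔼 n) 1).indicator fun _ => M)
    (s := closedBall t 1) (closedBall_mem_nhds t one_pos) ?_ ?_ ?_ ?_ ?_ ?_).2
  · exact Filter.Eventually.of_forall fun s => (hFc s).aestronglyMeasurable
  · exact (hFc t).integrable_of_hasCompactSupport etaW_supp.mul_right
  · exact (hF'c.comp (Continuous.prodMk_right t)).aestronglyMeasurable
  · refine Filter.Eventually.of_forall fun y s hs => ?_
    by_cases hy : y ∈ closedBall (0 : 𝔼 n) 1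
    · rw [indicator_of_mem hy]
      exact hM (s, y) ⟨hs, hy⟩
    · rw [indicator_of_notMem hy]
      simp only [mem_closedBall, dist_zero_right, not_le] at hy
      simp [etaW, max_zero_of_norm hy.le]
  · rw [integrable_indicator_iff measurableSet_closedBall]
    exact integrableOn_const (isCompact_closedBall (0 : 𝔼 n) 1).measure_lt_top.ne
  · refine Filter.Eventually.of_forall fun y s _ => ?_
    have h1 : HasDerivAt (fun s : ℝ => x + s • y) y s := by
      simpa using ((hasDerivAt_id s).smul_const y).const_add x
    have h2 := (hu.differentiable (by norm_num) (x + s • y)).hasFDerivAt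
    exact (h2.comp_hasDerivAt s h1).const_mul _

/-- weighted mean value inequality -/
lemma mean_le {u : (𝔼 n) → ℝ} (hu : ContDiff ℝ 2 u) (x : 𝔼 n) {R : ℝ} (hR : 0 < R)
    (hl : ∀ z ∈ ball x R, lap u z ≤ 0) :
    ∫ y, etaW y * u (x + R • y) ≤ (∫ y : 𝔼 n, etaW y) * u x := by
  have hd := hasDerivAt_mean hu x
  have hanti : AntitoneOn (fun t : ℝ => ∫ y, etaW y * u (x + t • y)) (Icc 0 R) := by
    apply antitoneOn_of_deriv_nonpos (convex_Icc 0 R)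
    · exact fun t _ => (hd t).continuousAt.continuousWithinAt
    · exact fun t _ => (hd t).differentiableAt.differentiableWithinAt
    · intro t ht
      rw [interior_Icc] at ht
      rw [(hd t).deriv, deriv_mean_eq hu]
      refine mul_nonpos_of_nonneg_of_nonpos ht.1.le (integral_nonpos fun y => ?_)
      by_cases hy : ‖y‖ < 1
      · refine mul_nonpos_of_nonneg_of_nonpos (psiW_nonneg y) (hl _ ?_)
        rw [mem_ball, dist_eq_norm, add_sub_cancel_left, norm_smul, Real.norm_eq_abs,
          abs_of_pos ht.1]
        nlinarith [norm_nonneg y, ht.1, ht.2]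
      · simp [psiW, max_zero_of_norm (not_lt.1 hy)]
  have := hanti (left_mem_Icc.2 hR.le) (right_mem_Icc.2 hR.le) hR.le
  simp only [zero_smul, add_zero] at this
  rwa [integral_mul_const] at this

/-- constant in the mean value inequality -/
noncomputable def meanC (n : ℕ) (σ : ℝ) : ℝ := (2 * σ) ^ n * ∫ y : 𝔼 n, etaW y

lemma mean_ball_le {u : (𝔼 n) → ℝ} (hu : ContDiff ℝ 2 u) (h0 : ∀ z, 0 ≤ u z) (x : 𝔼 n) {σ : ℝ}
    (hσ : 0 < σ) (hl : ∀ z ∈ ball x (2 * σ), lap u z ≤ 0) :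
    ∫ z in ball x σ, u z ≤ meanC n σ * u x := by
  have hR : (0 : ℝ) < 2 * σ := by linarith
  have h1 := mean_le hu x hR hl
  set R := 2 * σ with hRdef
  set F : (𝔼 n) → ℝ := fun z => etaW (R⁻¹ • (z - x)) * u z with hF
  have hFc : Continuous F := (etaW_cont.comp (by fun_prop)).mul hu.continuous
  have hFs : HasCompactSupport F := by
    apply HasCompactSupport.intro (isCompact_closedBall x R)
    intro z hz
    rw [mem_closedBall, not_le, dist_eq_norm] at hz
    have : 1 ≤ ‖R⁻¹ • (z - x)‖ := by
      rw [norm_smul, Real.norm_eq_abs, abs_of_pos (inv_pos.2 hR), inv_mul_eq_div,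
        le_div_iff₀ hR]
      linarith
    simp [hF, etaW, max_zero_of_norm this]
  have h2 : ∫ y, etaW y * u (x + R • y) = (R ^ n)⁻¹ * ∫ z, F z := by
    have e1 : ∀ y, etaW y * u (x + R • y) = (fun w => F (x + w)) (R • y) := by
      intro y
      simp [hF, smul_smul, inv_mul_cancel₀ hR.ne']
    simp_rw [e1]
    rw [Measure.integral_comp_smul volume (fun w => F (x + w)) R, integral_add_left_eq_self F x]
    simp [abs_of_pos hR]
  have h3 : ∫ z in ball x σ, u z ≤ ∫ z, F z := by
    rw [← integral_indicator measurableSet_ball]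
    apply integral_mono
    · rw [integrable_indicator_iff measurableSet_ball]
      exact (hu.continuous.continuousOn.integrableOn_compact
        (isCompact_closedBall x σ)).mono_set ball_subset_closedBall
    · exact hFc.integrable_of_hasCompactSupport hFs
    · intro z
      by_cases hz : z ∈ ball x σ
      · rw [indicator_of_mem hz]
        rw [mem_ball, dist_eq_norm] at hz
        have hn : ‖R⁻¹ • (z - x)‖ ≤ 1 / 2 := by
          rw [norm_smul, Real.norm_eq_abs, abs_of_pos (inv_pos.2 hR), inv_mul_eq_div,
            div_le_iff₀ hR]
          linarith
        have : 1 ≤ etaW (R⁻¹ • (z - x)) := by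
          unfold etaW
          have h34 : 3 / 4 ≤ max (1 - ‖R⁻¹ • (z - x)‖ ^ 2) 0 := by
            refine le_max_of_le_left ?_
            nlinarith [norm_nonneg (R⁻¹ • (z - x))]
          nlinarith
        exact le_mul_of_one_le_left (h0 z) this
      · rw [indicator_of_notMem hz]
        exact mul_nonneg (etaW_nonneg _) (h0 z)
  refine h3.trans ?_
  rw [h2] at h1
  have hRn : 0 < R ^ n := by positivity
  rw [inv_mul_le_iff₀ hRn] at h1
  unfold meanC
  rw [← hRdef]
  linarith

lemma partial_contDiffAt {u : (𝔼 n) → ℝ} {x : 𝔼 n} (hu : ContDiffAt ℝ 2 u x) (e : 𝔼 n) :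
    ContDiffAt ℝ 1 (fun y => fderiv ℝ u y e) x :=
  (hu.fderiv_right (m := 1) (by norm_num)).clm_apply contDiffAt_const

lemma diff_near {u : (𝔼 n) → ℝ} {x : 𝔼 n} (hu : ContDiffAt ℝ 2 u x) :
    ∀ᶠ y in nhds x, DifferentiableAt ℝ u y := by
  filter_upwards [hu.eventually (by simp)] with y hy
  exact hy.differentiableAt (by norm_num)

lemma lap_add {u w : (𝔼 n) → ℝ} {x : 𝔼 n} (hu : ContDiffAt ℝ 2 u x) (hw : ContDiffAt ℝ 2 w x) :
    lap (fun y => u y + w y) x = lap u x + lap w x := by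
  unfold lap
  rw [← Finset.sum_add_distrib]
  refine Finset.sum_congr rfl fun i _ => ?_
  have h : (fun y => fderiv ℝ (fun y => u y + w y) y (EuclideanSpace.single i 1)) =ᶠ[nhds x]
      fun y => fderiv ℝ u y (EuclideanSpace.single i 1)
        + fderiv ℝ w y (EuclideanSpace.single i 1) := by
    filter_upwards [diff_near hu, diff_near hw] with y h1 h2
    rw [fderiv_fun_add h1 h2]; rfl
  rw [h.fderiv_eq, fderiv_fun_add ((partial_contDiffAt hu _).differentiableAt (by norm_num))
    ((partial_contDiffAt hw _).differentiableAt (by norm_num))]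
  rfl

lemma lap_congr {u w : (𝔼 n) → ℝ} {x : 𝔼 n} (h : u =ᶠ[nhds x] w) : lap u x = lap w x := by
  unfold lap
  refine Finset.sum_congr rfl fun i _ => ?_
  have h2 : (fun y => fderiv ℝ u y (EuclideanSpace.single i 1)) =ᶠ[nhds x]
      fun y => fderiv ℝ w y (EuclideanSpace.single i 1) := by
    filter_upwards [h.fderiv (𝕜 := ℝ)] with y hy
    rw [hy]
  rw [h2.fderiv_eq]

lemma second_nonneg {w : (𝔼 n) → ℝ} {x : 𝔼 n} (hw : ContDiffAt ℝ 2 w x) (hm : IsLocalMin w x)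
    (e : 𝔼 n) : 0 ≤ fderiv ℝ (fun y => fderiv ℝ w y e) x e := by
  by_contra hneg
  rw [not_le] at hneg
  set g : ℝ → ℝ := fun t => w (x + t • e) with hg
  have hl : ∀ t, HasDerivAt (fun t : ℝ => x + t • e) e t := fun t => by
    simpa using ((hasDerivAt_id t).smul_const e).const_add x
  have ht : Filter.Tendsto (fun t : ℝ => x + t • e) (nhds 0) (nhds x) := by
    simpa using (hl 0).continuousAt.tendsto
  have hgm : IsLocalMin g 0 := by
    have : ∀ᶠ t in nhds (0 : ℝ), w x ≤ w (x + t • e) := ht.eventually hm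
    filter_upwards [this] with t h
    simpa [hg] using h
  have hd : deriv g =ᶠ[nhds 0] fun t => fderiv ℝ w (x + t • e) e := by
    filter_upwards [ht.eventually (diff_near hw)] with t h
    exact (h.hasFDerivAt.comp_hasDerivAt t (hl t)).deriv
  have hdd : deriv (deriv g) 0 = fderiv ℝ (fun y => fderiv ℝ w y e) x e := by
    rw [hd.deriv_eq]
    have h1 : DifferentiableAt ℝ (fun y => fderiv ℝ w y e) (x + (0 : ℝ) • e) := by
      simpa using (partial_contDiffAt hw e).differentiableAt (by norm_num)
    have h2 := (h1.hasFDerivAt.comp_hasDerivAt 0 (hl 0)).deriv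
    simpa [Function.comp_def] using h2
  have hgc : ContinuousAt g 0 := by
    have : ContinuousAt w (x + (0 : ℝ) • e) := by simpa using hw.continuousAt
    exact ContinuousAt.comp this (hl 0).continuousAt
  have hmax := isLocalMax_of_deriv_deriv_neg (f := g) (x₀ := 0) (by rw [hdd]; exact hneg)
    hgm.deriv_eq_zero hgc
  have hconst : g =ᶠ[nhds 0] fun _ => g 0 := by
    filter_upwards [hmax, hgm] with t h1 h2
    exact le_antisymm h1 h2
  have h3 : deriv (deriv g) 0 = 0 := by
    rw [hconst.deriv.deriv_eq]
    simp
  rw [hdd] at h3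
  linarith

lemma min_principle (hn : 0 < n) {Ω : Set (𝔼 n)} (hΩ : IsOpen Ω) (hb : Ω ⊆ ball 0 1)
    {v : (𝔼 n) → ℝ} (hv : ContDiffOn ℝ 2 v (closure Ω)) (hl : ∀ x ∈ Ω, lap v x ≤ 0)
    (hf : ∀ x ∈ frontier Ω, 0 ≤ v x) : ∀ x ∈ closure Ω, 0 ≤ v x := by
  have hcb : closure Ω ⊆ closedBall 0 1 :=
    closure_minimal (hb.trans ball_subset_closedBall) isClosed_closedBall
  have hcomp : IsCompact (closure Ω) :=
    (isCompact_closedBall (0 : 𝔼 n) 1).of_isClosed_subset isClosed_closure hcb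
  have hle : ∀ y ∈ closure Ω, 0 ≤ 1 - ‖y‖ ^ 2 := by
    intro y hy
    have := hcb hy
    rw [mem_closedBall, dist_zero_right] at this
    nlinarith [norm_nonneg y]
  have key : ∀ ε : ℝ, 0 < ε → ∀ x ∈ closure Ω, 0 ≤ v x + ε * (1 - ‖x‖ ^ 2) := by
    intro ε hε x hx
    have hq : ContDiff ℝ 2 (fun y : 𝔼 n => ε * (1 - ‖y‖ ^ 2)) :=
      contDiff_const.mul (contDiff_const.sub (contDiff_norm_sq ℝ))
    obtain ⟨x0, hx0, hmin⟩ := hcomp.exists_isMinOn ⟨x, hx⟩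
      (hv.continuousOn.add hq.continuous.continuousOn)
    refine le_trans ?_ (hmin hx)
    change 0 ≤ v x0 + ε * (1 - ‖x0‖ ^ 2)
    by_cases hin : x0 ∈ Ω
    · exfalso
      have hnh : Ω ∈ nhds x0 := hΩ.mem_nhds hin
      have hva : ContDiffAt ℝ 2 v x0 :=
        hv.contDiffAt (Filter.mem_of_superset hnh subset_closure)
      have hwa : ContDiffAt ℝ 2 (fun y => v y + ε * (1 - ‖y‖ ^ 2)) x0 := hva.add hq.contDiffAt
      have hlm : IsLocalMin (fun y => v y + ε * (1 - ‖y‖ ^ 2)) x0 :=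
        hmin.isLocalMin (Filter.mem_of_superset hnh subset_closure)
      have h1 : 0 ≤ lap (fun y => v y + ε * (1 - ‖y‖ ^ 2)) x0 :=
        Finset.sum_nonneg fun i _ => second_nonneg hwa hlm _
      rw [lap_add hva hq.contDiffAt] at h1
      have h2 : lap (fun y : 𝔼 n => ε * (1 - ‖y‖ ^ 2)) x0 = 4 * ‖x0‖ ^ 2 * 0 + 2 * n * (-ε) := by
        refine lap_radial (G := fun q => ε * (1 - q)) (G1 := fun _ => -ε) (G2 := fun _ => 0)
          (fun q _ => ?_) (fun q _ => hasDerivAt_const _ _) x0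
        simpa using ((hasDerivAt_id q).const_sub 1).const_mul ε
      have h3 := hl x0 hin
      have h4 : (0 : ℝ) < n := by exact_mod_cast hn
      have h5 : 0 < n * ε := by positivity
      rw [h2] at h1
      linarith
    · have : x0 ∈ frontier Ω := by
        rw [frontier, hΩ.interior_eq]; exact ⟨hx0, hin⟩
      exact add_nonneg (hf x0 this) (mul_nonneg hε.le (hle x0 hx0))
  intro x hx
  refine le_of_forall_pos_le_add fun ε hε => ?_
  have h1 := key ε hε x hx
  nlinarith [sq_nonneg ‖x‖]

lemma exists_cutoff {ρ r1 r2 : ℝ} (h0 : 0 < ρ) (h1 : ρ < r1) (h12 : r1 < r2) (h2 : r2 < 1)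
    {v : (𝔼 n) → ℝ} (hv : ContDiffOn ℝ 2 v (ball (0 : 𝔼 n) 1 \ closedBall 0 ρ))
    (hpos : ∀ x ∈ ball (0 : 𝔼 n) 1 \ closedBall 0 ρ, 0 ≤ v x) :
    ∃ u : (𝔼 n) → ℝ, ContDiff ℝ 2 u ∧ (∀ x, 0 ≤ u x) ∧
      ∀ x, r1 ≤ ‖x‖ → ‖x‖ ≤ r2 → u x = v x := by
  set a := ((ρ + r1) / 2) ^ 2 with ha
  set b := r1 ^ 2 with hb
  set c := r2 ^ 2 with hc
  set d := ((1 + r2) / 2) ^ 2 with hd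
  have hab : a < b := by rw [ha, hb]; nlinarith
  have hcd : c < d := by rw [hc, hd]; nlinarith
  have hρa : ρ ^ 2 < a := by rw [ha]; nlinarith
  have hd1 : d < 1 := by rw [hd]; nlinarith
  set χ : (𝔼 n) → ℝ := fun y => Real.smoothTransition ((‖y‖ ^ 2 - a) / (b - a)) *
    Real.smoothTransition ((d - ‖y‖ ^ 2) / (d - c)) with hχ
  have hχs : ContDiff ℝ 2 χ := by
    apply ContDiff.mul
    · exact Real.smoothTransition.contDiff.comp
        (((contDiff_norm_sq ℝ).sub contDiff_const).div_const _)
    · exact Real.smoothTransition.contDiff.comp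
        ((contDiff_const.sub (contDiff_norm_sq ℝ)).div_const _)
  have hχ0 : ∀ y, 0 ≤ χ y := fun y =>
    mul_nonneg (Real.smoothTransition.nonneg _) (Real.smoothTransition.nonneg _)
  have hz1 : ∀ y : 𝔼 n, ‖y‖ ^ 2 < a → χ y = 0 := by
    intro y hy
    have : Real.smoothTransition ((‖y‖ ^ 2 - a) / (b - a)) = 0 :=
      Real.smoothTransition.zero_of_nonpos
        (div_nonpos_of_nonpos_of_nonneg (by linarith) (by linarith))
    simp [hχ, this]
  have hz2 : ∀ y : 𝔼 n, d < ‖y‖ ^ 2 → χ y = 0 := by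
    intro y hy
    have : Real.smoothTransition ((d - ‖y‖ ^ 2) / (d - c)) = 0 :=
      Real.smoothTransition.zero_of_nonpos
        (div_nonpos_of_nonpos_of_nonneg (by linarith) (by linarith))
    simp [hχ, this]
  have hqc : Continuous (fun y : 𝔼 n => ‖y‖ ^ 2) := by fun_prop
  have hΩ : IsOpen (ball (0 : 𝔼 n) 1 \ closedBall 0 ρ) := isOpen_ball.sdiff isClosed_closedBall
  refine ⟨fun y => χ y * v y, ?_, ?_, ?_⟩
  · rw [contDiff_iff_contDiffAt]
    intro x
    by_cases hx1 : ‖x‖ ≤ ρ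
    · have hx : ‖x‖ ^ 2 < a := by nlinarith [norm_nonneg x]
      have : (fun y => χ y * v y) =ᶠ[nhds x] fun _ => 0 := by
        filter_upwards [hqc.continuousAt.eventually_lt_const hx] with y hy
        rw [hz1 y hy, zero_mul]
      exact contDiffAt_const.congr_of_eventuallyEq this
    by_cases hx2 : 1 ≤ ‖x‖
    · have hx : d < ‖x‖ ^ 2 := by nlinarith [norm_nonneg x]
      have : (fun y => χ y * v y) =ᶠ[nhds x] fun _ => 0 := by
        filter_upwards [hqc.continuousAt.eventually_const_lt hx] with y hy
        rw [hz2 y hy, zero_mul]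
      exact contDiffAt_const.congr_of_eventuallyEq this
    · refine hχs.contDiffAt.mul (hv.contDiffAt (hΩ.mem_nhds ?_))
      simp only [mem_sdiff, mem_ball, mem_closedBall, dist_zero_right]
      exact ⟨not_le.1 hx2, hx1⟩
  · intro x
    change 0 ≤ χ x * v x
    by_cases hx1 : ‖x‖ ≤ ρ
    · rw [hz1 x (by nlinarith [norm_nonneg x]), zero_mul]
    by_cases hx2 : 1 ≤ ‖x‖
    · rw [hz2 x (by nlinarith [norm_nonneg x]), zero_mul]
    · refine mul_nonneg (hχ0 x) (hpos x ?_)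
      simp only [mem_sdiff, mem_ball, mem_closedBall, dist_zero_right]
      exact ⟨not_le.1 hx2, hx1⟩
  · intro x hx1 hx2
    have hA : Real.smoothTransition ((‖x‖ ^ 2 - a) / (b - a)) = 1 := by
      apply Real.smoothTransition.one_of_one_le
      rw [le_div_iff₀ (by linarith)]
      have : b ≤ ‖x‖ ^ 2 := by rw [hb]; nlinarith
      linarith
    have hB : Real.smoothTransition ((d - ‖x‖ ^ 2) / (d - c)) = 1 := by
      apply Real.smoothTransition.one_of_one_le
      rw [le_div_iff₀ (by linarith)]
      have : ‖x‖ ^ 2 ≤ c := by rw [hc]; nlinarith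
      linarith
    simp [hχ, hA, hB]

/-- nonnegative functions, superharmonic on a fixed annulus -/
def SupClass (n : ℕ) (a b : ℝ) (u : (𝔼 n) → ℝ) : Prop :=
  ContDiff ℝ 2 u ∧ (∀ x, 0 ≤ u x) ∧ ∀ x, a < ‖x‖ → ‖x‖ < b → lap u x ≤ 0

lemma annulus_preconnected (hn : 2 ≤ n) {α β : ℝ} (hα : 0 < α) :
    IsPreconnected {y : 𝔼 n | α ≤ ‖y‖ ∧ ‖y‖ ≤ β} := by
  have hr : 1 < Module.rank ℝ (𝔼 n) := by
    apply Module.lt_rank_of_lt_finrank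
    simp
    omega
  have h := ((isPreconnected_sphere hr (0 : 𝔼 n) 1).prod (isPreconnected_Icc (a := α) (b := β)))
  have h2 := h.image (fun p : (𝔼 n) × ℝ => p.2 • p.1) (by fun_prop)
  convert h2 using 1
  ext y
  simp only [mem_ofPred_eq, mem_image, mem_prod, mem_sphere_iff_norm, sub_zero, mem_Icc, Prod.exists]
  constructor
  · rintro ⟨h1, h2⟩
    have hy : 0 < ‖y‖ := by linarith
    refine ⟨‖y‖⁻¹ • y, ‖y‖, ⟨?_, h1, h2⟩, ?_⟩
    · rw [norm_smul, norm_inv, norm_norm, inv_mul_cancel₀ hy.ne']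
    · rw [smul_smul, mul_inv_cancel₀ hy.ne', one_smul]
  · rintro ⟨z, t, ⟨h1, h2, h3⟩, rfl⟩
    rw [norm_smul, h1, mul_one, Real.norm_eq_abs, abs_of_pos (by linarith)]
    exact ⟨h2, h3⟩

lemma annulus_compact {α β : ℝ} : IsCompact {y : 𝔼 n | α ≤ ‖y‖ ∧ ‖y‖ ≤ β} := by
  apply (isCompact_closedBall (0 : 𝔼 n) β).of_isClosed_subset
  · exact (isClosed_le continuous_const continuous_norm).inter
      (isClosed_le continuous_norm continuous_const)
  · intro y hy
    simpa using hy.2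

lemma meanC_nonneg {σ : ℝ} (hσ : 0 ≤ σ) : 0 ≤ meanC n σ :=
  mul_nonneg (by positivity) (integral_nonneg etaW_nonneg)

lemma intOn_ball {u : (𝔼 n) → ℝ} (hu : Continuous u) (x : 𝔼 n) (s : ℝ) :
    IntegrableOn u (ball x s) :=
  (hu.continuousOn.integrableOn_compact (isCompact_closedBall x s)).mono_set ball_subset_closedBall

lemma ball_mono_int {u : (𝔼 n) → ℝ} (hu : Continuous u) (h0 : ∀ z, 0 ≤ u z) {x y : 𝔼 n} {s t : ℝ}
    (h : ball x s ⊆ ball y t) : ∫ z in ball x s, u z ≤ ∫ z in ball y t, u z :=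
  setIntegral_mono_set (intOn_ball hu y t) (Filter.Eventually.of_forall h0) h.eventuallyLE

lemma harnack (hn : 2 ≤ n) {a α β b : ℝ} (hα : 0 < α) (ha : a < α) (hb : β < b) :
    ∃ C : ℝ, 0 < C ∧ ∀ u, SupClass n a b u → ∀ x : 𝔼 n, α ≤ ‖x‖ → ‖x‖ ≤ β →
      ∫ y in {y : 𝔼 n | α ≤ ‖y‖ ∧ ‖y‖ ≤ β}, u y ≤ C * u x := by
  set K := {y : 𝔼 n | α ≤ ‖y‖ ∧ ‖y‖ ≤ β} with hK
  rcases K.eq_empty_or_nonempty with hE | ⟨x0, hx0⟩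
  · refine ⟨1, one_pos, fun u _ x h1 h2 => ?_⟩
    have : x ∈ K := ⟨h1, h2⟩
    rw [hE] at this
    exact this.elim
  obtain ⟨s, hs, hsa, hsb⟩ : ∃ s : ℝ, 0 < s ∧ 6 * s ≤ α - a ∧ 6 * s ≤ b - β := by
    refine ⟨min (α - a) (b - β) / 6, ?_, ?_, ?_⟩
    · have : 0 < min (α - a) (b - β) := lt_min (by linarith) (by linarith)
      linarith
    · have := min_le_left (α - a) (b - β)
      linarith
    · have := min_le_right (α - a) (b - β)
      linarith
  have hreg : ∀ x ∈ K, ∀ z ∈ ball x (5 * s), a < ‖z‖ ∧ ‖z‖ < b := by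
    intro x hx z hz
    rw [mem_ball, dist_eq_norm] at hz
    have h1 := norm_sub_norm_le z x
    have h2 := norm_sub_norm_le x z
    rw [norm_sub_rev] at h2
    constructor <;> linarith [hx.1, hx.2]
  -- pointwise bound
  have hpt : ∀ u, SupClass n a b u → ∀ x ∈ K, ∀ z, dist z x < s →
      ∫ w in ball x s, u w ≤ meanC n (2 * s) * u z := by
    intro u hu x hx z hz
    refine le_trans (ball_mono_int hu.1.continuous hu.2.1 (y := z) (t := 2 * s) ?_)
      (mean_ball_le hu.1 hu.2.1 z (by linarith) ?_)
    · apply ball_subset_ball'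
      rw [dist_comm]; linarith
    · intro w hw
      have : w ∈ ball x (5 * s) := by
        rw [mem_ball] at hw ⊢
        have := dist_triangle w z x
        linarith
      obtain ⟨h1, h2⟩ := hreg x hx w this
      exact hu.2.2 w h1 h2
  set V : ℝ := (volume : Measure (𝔼 n)).real (ball 0 (s / 2)) with hV
  have hVpos : 0 < V :=
    ENNReal.toReal_pos (measure_ball_pos volume _ (by linarith)).ne' measure_ball_lt_top.ne
  have hm0 := meanC_nonneg (n := n) (σ := 2 * s) (by linarith)
  set P : (𝔼 n) → (𝔼 n) → Prop := fun x y => ∃ C : ℝ, 0 < C ∧ ∀ u, SupClass n a b u →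
    ∫ w in ball x s, u w ≤ C * ∫ w in ball y s, u w with hP
  have hloc : ∀ x ∈ K, ∀ y ∈ K, dist x y < s → P x y := by
    intro x hx y hy hxy
    refine ⟨meanC n (2 * s) / V + 1, by positivity, fun u hu => ?_⟩
    have hmy : 0 ≤ ∫ w in ball y s, u w := integral_nonneg hu.2.1
    set w := midpoint ℝ x y with hw
    have hwx : dist w x = dist x y / 2 := by
      rw [hw, dist_midpoint_left]; norm_num; ring
    have hwy : dist w y = dist x y / 2 := by
      rw [hw, dist_midpoint_right]; norm_num; ring
    have h1 : V * ∫ w in ball x s, u w ≤ meanC n (2 * s) * ∫ z in ball w (s / 2), u z := by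
      have hVw : (volume : Measure (𝔼 n)).real (ball w (s / 2)) = V := by
        rw [hV, Measure.real, Measure.real, Measure.addHaar_ball_center]
      rw [← hVw, ← smul_eq_mul, ← setIntegral_const, ← integral_const_mul]
      refine setIntegral_mono_on (integrableOn_const measure_ball_lt_top.ne)
        ((intOn_ball hu.1.continuous _ _).const_mul _) measurableSet_ball ?_
      intro z hz
      rw [mem_ball] at hz
      refine hpt u hu x hx z ?_
      have := dist_triangle z w x
      linarith
    have h2 : ∫ z in ball w (s / 2), u z ≤ ∫ z in ball y s, u z := by
      apply ball_mono_int hu.1.continuous hu.2.1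
      apply ball_subset_ball'
      linarith
    have h3 : ∫ w in ball x s, u w ≤ meanC n (2 * s) / V * ∫ w in ball y s, u w := by
      rw [div_mul_eq_mul_div, le_div_iff₀ hVpos, mul_comm]
      exact h1.trans (mul_le_mul_of_nonneg_left h2 hm0)
    linarith
  have hall : ∀ x ∈ K, ∀ y ∈ K, P x y := by
    intro x hx y hy
    refine (annulus_preconnected hn hα).induction₂' P ?_ ?_ hx hy
    · intro x hx
      filter_upwards [self_mem_nhdsWithin, mem_nhdsWithin_of_mem_nhds (ball_mem_nhds x hs)]
        with y hy hd
      exact ⟨hloc x hx y hy (by rw [dist_comm]; exact hd), hloc y hy x hx hd⟩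
    · rintro x y z - - - ⟨C1, hC1, h1⟩ ⟨C2, hC2, h2⟩
      refine ⟨C1 * C2, mul_pos hC1 hC2, fun u hu => ?_⟩
      rw [mul_assoc]
      exact (h1 u hu).trans (mul_le_mul_of_nonneg_left (h2 u hu) hC1.le)
  have hA : ∀ y : K, ∃ C : ℝ, 0 < C ∧ ∀ u, SupClass n a b u →
    ∫ w in ball (y : 𝔼 n) s, u w ≤ C * ∫ w in ball x0 s, u w := fun y => hall y y.2 x0 hx0
  have hB : ∀ y : K, ∃ C : ℝ, 0 < C ∧ ∀ u, SupClass n a b u →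
    ∫ w in ball x0 s, u w ≤ C * ∫ w in ball (y : 𝔼 n) s, u w := fun y => hall x0 hx0 y y.2
  choose A hA0 hA using hA
  choose B hB0 hB using hB
  obtain ⟨t, htc⟩ := (annulus_compact (n := n) (α := α) (β := β)).elim_finite_subcover
    (fun y : K => ball (y : 𝔼 n) s) (fun _ => isOpen_ball) (by
      intro y hy
      exact mem_iUnion.2 ⟨⟨y, hy⟩, mem_ball_self hs⟩)
  refine ⟨(∑ y ∈ t, A y) * ((∑ y ∈ t, B y) * meanC n (2 * s)) + 1, ?_, ?_⟩
  · have h1 : 0 ≤ ∑ y ∈ t, A y := Finset.sum_nonneg fun y _ => (hA0 y).le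
    have h2 : 0 ≤ ∑ y ∈ t, B y := Finset.sum_nonneg fun y _ => (hB0 y).le
    positivity
  intro u hu x hx1 hx2
  have hSA : 0 ≤ ∑ y ∈ t, A y := Finset.sum_nonneg fun y _ => (hA0 y).le
  have step1 : ∫ y in K, u y ≤ ∑ y ∈ t, ∫ w in ball (y : 𝔼 n) s, u w := by
    have hKm : MeasurableSet K := annulus_compact.measurableSet
    rw [← integral_indicator hKm]
    simp_rw [← integral_indicator measurableSet_ball]
    have hint : ∀ y ∈ t, Integrable ((ball (y : 𝔼 n) s).indicator u) := fun y _ =>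
      (integrable_indicator_iff measurableSet_ball).2 (intOn_ball hu.1.continuous _ _)
    rw [← integral_finsetSum _ hint]
    refine integral_mono ((integrable_indicator_iff hKm).2
      (hu.1.continuous.continuousOn.integrableOn_compact annulus_compact))
      (integrable_finsetSum _ hint) fun z => ?_
    have hnn : ∀ y ∈ t, 0 ≤ (ball (y : 𝔼 n) s).indicator u z :=
      fun y _ => indicator_nonneg (fun w _ => hu.2.1 w) z
    by_cases hz : z ∈ K
    · obtain ⟨y, hy, hzy⟩ : ∃ y ∈ t, z ∈ ball (y : 𝔼 n) s := by
        simpa using htc hz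
      rw [indicator_of_mem hz]
      refine le_trans ?_ (Finset.single_le_sum hnn hy)
      rw [indicator_of_mem hzy]
    · rw [indicator_of_notMem hz]
      exact Finset.sum_nonneg hnn
  have step2 : ∑ y ∈ t, ∫ w in ball (y : 𝔼 n) s, u w
      ≤ (∑ y ∈ t, A y) * ∫ w in ball x0 s, u w := by
    rw [Finset.sum_mul]
    exact Finset.sum_le_sum fun y _ => hA y u hu
  have step3 : ∫ w in ball x0 s, u w ≤ (∑ y ∈ t, B y) * (meanC n (2 * s) * u x) := by
    obtain ⟨y, hy, hxy⟩ : ∃ y ∈ t, x ∈ ball (y : 𝔼 n) s := by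
      simpa using htc (show x ∈ K from ⟨hx1, hx2⟩)
    have h1 := hpt u hu y y.2 x hxy
    have h2 : B y ≤ ∑ y ∈ t, B y := Finset.single_le_sum (fun y _ => (hB0 y).le) hy
    calc ∫ w in ball x0 s, u w ≤ B y * ∫ w in ball (y : 𝔼 n) s, u w := hB y u hu
      _ ≤ B y * (meanC n (2 * s) * u x) := mul_le_mul_of_nonneg_left h1 (hB0 y).le
      _ ≤ _ := mul_le_mul_of_nonneg_right h2 (mul_nonneg hm0 (hu.2.1 x))
  have := mul_le_mul_of_nonneg_left step3 hSA
  have hux := hu.2.1 x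
  calc ∫ y in K, u y ≤ (∑ y ∈ t, A y) * ((∑ y ∈ t, B y) * (meanC n (2 * s) * u x)) :=
        step1.trans (step2.trans this)
    _ ≤ _ := by nlinarith

lemma exists_test (hn : 3 ≤ n) {ρ₀ ρ₁ : ℝ} (h0 : 0 < ρ₀) (h01 : ρ₀ < ρ₁) (h1 : ρ₁ < 1) :
    ∃ C : ℝ, 0 < C ∧ ∀ ρ : ℝ, 0 < ρ → 2 * ρ < ρ₀ → ∃ φ : (𝔼 n) → ℝ, ContDiff ℝ 2 φ ∧
      (∀ y, 0 ≤ φ y) ∧ (∀ y, ‖y‖ ≤ 3 / 2 * ρ → φ y = 0) ∧ (∀ y, ρ₁ ≤ ‖y‖ → φ y = 0) ∧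
      (∀ y, 2 * ρ ≤ ‖y‖ → ‖y‖ ≤ ρ₀ → 1 / 1000 ≤ φ y) ∧
      (∀ y, ρ₀ ≤ ‖y‖ → ‖y‖ ≤ ρ₁ → - lap φ y ≤ C) ∧
      (∀ y, ¬ (ρ₀ ≤ ‖y‖ ∧ ‖y‖ ≤ ρ₁) → - lap φ y ≤ 0) := by
  have hD : 0 < ρ₁ ^ 2 - ρ₀ ^ 2 := by nlinarith
  set K : ℝ := ((ρ₁ ^ 2 - ρ₀ ^ 2) ^ 3)⁻¹ with hK
  have hK0 : 0 < K := by positivity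
  have hn3 : (3 : ℝ) ≤ n := by exact_mod_cast hn
  refine ⟨3 * K * (24 + 6 * n), by positivity, ?_⟩
  intro ρ hρ hρ0
  set mx : ℝ → ℝ := fun q => max (q - ρ₀ ^ 2) 0 with hmx
  have hmx0 : ∀ q, 0 ≤ mx q := fun q => le_max_right _ _
  set M : ℝ → ℝ := fun q => 1 - 2 * ρ * (q + ρ ^ 2) ^ (-(1 / 2) : ℝ) - K * mx q ^ 3 with hM
  set M1 : ℝ → ℝ := fun q => ρ * (q + ρ ^ 2) ^ (-(3 / 2) : ℝ) - K * (3 * mx q ^ 2) with hM1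
  set M2 : ℝ → ℝ := fun q => -(3 / 2) * ρ * (q + ρ ^ 2) ^ (-(5 / 2) : ℝ) - K * (6 * mx q) with hM2
  have hpos : ∀ q : ℝ, 0 ≤ q → 0 < q + ρ ^ 2 := fun q hq => by positivity
  have dM : ∀ q, 0 ≤ q → HasDerivAt M (M1 q) q := by
    intro q hq
    have e1 := (((hasDerivAt_id q).add_const (ρ ^ 2)).rpow_const (p := (-(1 / 2) : ℝ))
      (Or.inl (hpos q hq).ne')).const_mul (2 * ρ)
    have e2 := ((hasDerivAt_max_pow 1 (q - ρ₀ ^ 2)).comp q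
      ((hasDerivAt_id q).sub_const (ρ₀ ^ 2))).const_mul K
    refine ((e1.const_sub 1).sub e2).congr_deriv ?_
    simp only [hM1, hmx, id]
    norm_num
    ring
  have dM1 : ∀ q, 0 ≤ q → HasDerivAt M1 (M2 q) q := by
    intro q hq
    have e1 := (((hasDerivAt_id q).add_const (ρ ^ 2)).rpow_const (p := (-(3 / 2) : ℝ))
      (Or.inl (hpos q hq).ne')).const_mul ρ
    have e2 := (((hasDerivAt_max_pow 0 (q - ρ₀ ^ 2)).comp q
      ((hasDerivAt_id q).sub_const (ρ₀ ^ 2))).const_mul 3).const_mul K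
    refine (e1.sub e2).congr_deriv ?_
    simp only [hM2, hmx, id]
    norm_num
    ring
  set m : ℝ → ℝ := fun q => max (M q) 0 with hm
  have hm0 : ∀ q, 0 ≤ m q := fun q => le_max_right _ _
  have dG : ∀ q, 0 ≤ q → HasDerivAt (fun q => m q ^ 3) (3 * m q ^ 2 * M1 q) q := by
    intro q hq
    have e1 := (hasDerivAt_max_pow 1 (M q)).comp q (dM q hq)
    refine e1.congr_deriv ?_
    simp only [hm]
    norm_num
  have dG1 : ∀ q, 0 ≤ q → HasDerivAt (fun q => 3 * m q ^ 2 * M1 q)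
      (6 * m q * M1 q ^ 2 + 3 * m q ^ 2 * M2 q) q := by
    intro q hq
    have e1 := (((hasDerivAt_max_pow 0 (M q)).comp q (dM q hq)).const_mul 3).mul (dM1 q hq)
    refine e1.congr_deriv ?_
    simp only [hm, Function.comp]
    norm_num
    ring
  have hS : ∀ q, 0 ≤ q → 0 < (q + ρ ^ 2) ^ (-(1 / 2) : ℝ) ∧
      ((q + ρ ^ 2) ^ (-(1 / 2) : ℝ)) ^ 2 * (q + ρ ^ 2) = 1 := by
    intro q hq
    refine ⟨Real.rpow_pos_of_pos (hpos q hq) _, ?_⟩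
    rw [← Real.rpow_natCast, ← Real.rpow_mul (hpos q hq).le]
    norm_num
    rw [Real.rpow_neg_one, inv_mul_cancel₀ (hpos q hq).ne']
  have hMle : ∀ q, 0 ≤ q → M q ≤ 1 := by
    intro q hq
    have a1 := (hS q hq).1
    have a2 : 0 ≤ K * mx q ^ 3 := mul_nonneg hK0.le (pow_nonneg (hmx0 q) 3)
    have a3 : 0 < ρ * (q + ρ ^ 2) ^ (-(1 / 2) : ℝ) := mul_pos hρ a1
    simp only [hM]
    linarith
  have hmle : ∀ q, 0 ≤ q → m q ≤ 1 := fun q hq => max_le (hMle q hq) zero_le_one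
  have hout : ∀ q, ρ₁ ^ 2 ≤ q → m q = 0 := by
    intro q hq
    have hq0 : 0 ≤ q := by nlinarith
    refine max_eq_right ?_
    have a1 := (hS q hq0).1
    have a3 : 0 < ρ * (q + ρ ^ 2) ^ (-(1 / 2) : ℝ) := mul_pos hρ a1
    have a2 : 1 ≤ K * mx q ^ 3 := by
      rw [hK, inv_mul_eq_div, le_div_iff₀ (by positivity), one_mul]
      exact pow_le_pow_left₀ hD.le (le_max_of_le_left (by linarith)) 3
    simp only [hM]
    linarith
  have hmxin : ∀ q, q ≤ ρ₀ ^ 2 → mx q = 0 := fun q hq => max_eq_right (by linarith)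
  have hlap : ∀ y : 𝔼 n, - lap (fun y : 𝔼 n => m (‖y‖ ^ 2) ^ 3) y
      ≤ 3 * m (‖y‖ ^ 2) ^ 2 * (K * (24 * ‖y‖ ^ 2 * mx (‖y‖ ^ 2) + 6 * n * mx (‖y‖ ^ 2) ^ 2)) := by
    intro y
    rw [lap_radial dG dG1 y]
    have hq : 0 ≤ ‖y‖ ^ 2 := by positivity
    generalize ‖y‖ ^ 2 = q at hq
    have b1 : (q + ρ ^ 2) ^ (-(3 / 2) : ℝ) = (q + ρ ^ 2) ^ (-(5 / 2) : ℝ) * (q + ρ ^ 2) := by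
      rw [← Real.rpow_add_one (hpos q hq).ne']
      norm_num
    have b2 : 0 < (q + ρ ^ 2) ^ (-(5 / 2) : ℝ) := Real.rpow_pos_of_pos (hpos q hq) _
    have b3 : 0 ≤ -(6 * q) + 2 * n * (q + ρ ^ 2) := by nlinarith [hpos q hq]
    have b4 : 0 ≤ ρ * (q + ρ ^ 2) ^ (-(5 / 2) : ℝ) * (-(6 * q) + 2 * n * (q + ρ ^ 2)) := by
      positivity
    have b5 : 4 * q * M2 q + 2 * n * M1 q
        = ρ * (q + ρ ^ 2) ^ (-(5 / 2) : ℝ) * (-(6 * q) + 2 * n * (q + ρ ^ 2))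
          - K * (24 * q * mx q + 6 * n * mx q ^ 2) := by
      simp only [hM1, hM2, b1]
      ring
    have b6 : 4 * q * (6 * m q * M1 q ^ 2 + 3 * m q ^ 2 * M2 q) + 2 * n * (3 * m q ^ 2 * M1 q)
        = 24 * q * m q * M1 q ^ 2 + 3 * m q ^ 2 * (4 * q * M2 q + 2 * n * M1 q) := by ring
    have b7 : 0 ≤ 24 * q * m q * M1 q ^ 2 := by
      have := hm0 q
      positivity
    have b8 : 0 ≤ 3 * m q ^ 2 * (ρ * (q + ρ ^ 2) ^ (-(5 / 2) : ℝ)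
        * (-(6 * q) + 2 * n * (q + ρ ^ 2))) := mul_nonneg (by positivity) b4
    rw [b6, b5, mul_sub]
    linarith
  refine ⟨fun y => m (‖y‖ ^ 2) ^ 3, ?_, ?_, ?_, ?_, ?_, ?_, ?_⟩
  · refine contDiff_max_cube.comp ?_
    have c1 : ContDiff ℝ 2 (fun y : 𝔼 n => (‖y‖ ^ 2 + ρ ^ 2) ^ (-(1 / 2) : ℝ)) :=
      ((contDiff_norm_sq ℝ).add contDiff_const).rpow_const_of_ne
        (fun y => (hpos _ (by positivity)).ne')
    have c2 : ContDiff ℝ 2 (fun y : 𝔼 n => mx (‖y‖ ^ 2) ^ 3) :=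
      contDiff_max_cube.comp ((contDiff_norm_sq ℝ).sub contDiff_const)
    exact (contDiff_const.sub (contDiff_const.mul c1)).sub (contDiff_const.mul c2)
  · exact fun y => pow_nonneg (hm0 _) 3
  · intro y hy
    have hq : 0 ≤ ‖y‖ ^ 2 := by positivity
    have hq2 : ‖y‖ ^ 2 ≤ 9 / 4 * ρ ^ 2 := by nlinarith [norm_nonneg y]
    obtain ⟨s1, s2⟩ := hS _ hq
    have hz : m (‖y‖ ^ 2) = 0 := by
      refine max_eq_right ?_
      simp only [hM]
      set S := (‖y‖ ^ 2 + ρ ^ 2) ^ (-(1 / 2) : ℝ)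
      have a3 : 1 / 2 ≤ ρ * S := by
        by_contra hc
        rw [not_le] at hc
        have p1 : 0 < ρ * S := mul_pos hρ s1
        have p2 : S ^ 2 * (‖y‖ ^ 2 + ρ ^ 2) ≤ S ^ 2 * (13 / 4 * ρ ^ 2) :=
          mul_le_mul_of_nonneg_left (by linarith) (by positivity)
        nlinarith
      have a2 : 0 ≤ K * mx (‖y‖ ^ 2) ^ 3 := mul_nonneg hK0.le (pow_nonneg (hmx0 _) 3)
      linarith
    simp [hz]
  · intro y hy
    have : m (‖y‖ ^ 2) = 0 := hout _ (by nlinarith)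
    simp [this]
  · intro y hy1 hy2
    have hq : 0 ≤ ‖y‖ ^ 2 := by positivity
    have hq2 : 4 * ρ ^ 2 ≤ ‖y‖ ^ 2 := by nlinarith [norm_nonneg y]
    obtain ⟨s1, s2⟩ := hS _ hq
    have hz : 1 / 10 ≤ m (‖y‖ ^ 2) := by
      refine le_max_of_le_left ?_
      simp only [hM]
      rw [hmxin (‖y‖ ^ 2) (by nlinarith [norm_nonneg y])]
      set S := (‖y‖ ^ 2 + ρ ^ 2) ^ (-(1 / 2) : ℝ)
      have a3 : ρ * S ≤ 9 / 20 := by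
        by_contra hc
        rw [not_le] at hc
        have p2 : S ^ 2 * (5 * ρ ^ 2) ≤ S ^ 2 * (‖y‖ ^ 2 + ρ ^ 2) :=
          mul_le_mul_of_nonneg_left (by linarith) (by positivity)
        nlinarith
      linarith
    have := pow_le_pow_left₀ (by norm_num) hz 3
    norm_num at this ⊢
    exact this
  · intro y hy1 hy2
    refine (hlap y).trans ?_
    have hq : 0 ≤ ‖y‖ ^ 2 := by positivity
    have hq1 : ‖y‖ ^ 2 ≤ 1 := by nlinarith [norm_nonneg y]
    have e1 := hmle _ hq
    have e2 := hm0 (‖y‖ ^ 2)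
    have e3 := hmx0 (‖y‖ ^ 2)
    have e4 : mx (‖y‖ ^ 2) ≤ 1 := max_le (by nlinarith) zero_le_one
    generalize ‖y‖ ^ 2 = q at *
    have f1 : m q ^ 2 ≤ 1 := pow_le_one₀ e2 e1
    have f2 : mx q ^ 2 ≤ 1 := pow_le_one₀ e3 e4
    have f3 : q * mx q ≤ 1 := mul_le_one₀ hq1 e3 e4
    have f5 : 6 * (n : ℝ) * mx q ^ 2 ≤ 6 * n * 1 := mul_le_mul_of_nonneg_left f2 (by positivity)
    have f6 : K * (24 * q * mx q + 6 * n * mx q ^ 2) ≤ K * (24 + 6 * n) :=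
      mul_le_mul_of_nonneg_left (by nlinarith) hK0.le
    have f7 : 0 ≤ K * (24 + 6 * (n : ℝ)) := by positivity
    calc 3 * m q ^ 2 * (K * (24 * q * mx q + 6 * n * mx q ^ 2))
        ≤ 3 * m q ^ 2 * (K * (24 + 6 * n)) := mul_le_mul_of_nonneg_left f6 (by positivity)
      _ ≤ 3 * 1 * (K * (24 + 6 * n)) := by
          apply mul_le_mul_of_nonneg_right _ f7
          linarith
      _ = _ := by ring
  · intro y hy
    refine (hlap y).trans (le_of_eq ?_)
    by_cases hy1 : ρ₀ ≤ ‖y‖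
    · have : ρ₁ ≤ ‖y‖ := by
        by_contra hc
        exact hy ⟨hy1, (not_le.1 hc).le⟩
      rw [hout _ (by nlinarith)]
      ring
    · rw [hmxin _ (by nlinarith [norm_nonneg y])]
      ring

end AnnulusAux

/-- quantitative minimum principle on the annulus `B_1 \ B_ρ`,
uniform in the inner radius `ρ`. -/
theorem annulus_min_principle (n : ℕ) (hn : 3 ≤ n) (ρ₀ ρ₁ ρ₂ : ℝ)
    (h0 : 0 < ρ₀) (h01 : ρ₀ < ρ₁) (h12 : ρ₁ < ρ₂) (h21 : ρ₂ < 1) :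
    ∃ C : ℝ, 1 < C ∧
      ∀ ρ : ℝ, 0 < ρ → 2 * ρ < ρ₀ →
        ∀ v f : EuclideanSpace ℝ (Fin n) → ℝ,
          ContDiffOn ℝ 2 v (closure (ball (0 : EuclideanSpace ℝ (Fin n)) 1 \ closedBall 0 ρ)) →
          ContinuousOn f (closure (ball (0 : EuclideanSpace ℝ (Fin n)) 1 \ closedBall 0 ρ)) →
          (∀ x ∈ (ball (0 : EuclideanSpace ℝ (Fin n)) 1 \ closedBall 0 ρ), - lap v x = f x) →
          (∀ x ∈ (ball (0 : EuclideanSpace ℝ (Fin n)) 1 \ closedBall 0 ρ), 0 ≤ f x) →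
          (∀ x ∈ frontier (ball (0 : EuclideanSpace ℝ (Fin n)) 1 \ closedBall 0 ρ), 0 ≤ v x) →
          ∀ x : EuclideanSpace ℝ (Fin n), ρ₁ ≤ ‖x‖ → ‖x‖ ≤ ρ₂ →
            (1 / C) * ∫ y in {y : EuclideanSpace ℝ (Fin n) | 2 * ρ ≤ ‖y‖ ∧ ‖y‖ ≤ ρ₀}, f y
              ≤ v x := by
  obtain ⟨Ch, hCh, hH⟩ := harnack (n := n) (by omega) (a := 3 / 4 * ρ₀) (α := ρ₀) (β := ρ₂)
    (b := (1 + ρ₂) / 2) h0 (by linarith) (by linarith)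
  obtain ⟨Ct, hCt, hT⟩ := exists_test hn h0 h01 (h12.trans h21)
  have hCC : 0 < 1000 * (Ct * Ch) := by positivity
  refine ⟨1000 * (Ct * Ch) + 1, by linarith, ?_⟩
  intro ρ hρ hρ0 v f hv hf heq hfn hfr x hx1 hx2
  set Ω := ball (0 : EuclideanSpace ℝ (Fin n)) 1 \ closedBall 0 ρ with hΩdef
  have hΩ : IsOpen Ω := isOpen_ball.sdiff isClosed_closedBall
  have hmem : ∀ y : EuclideanSpace ℝ (Fin n), ρ < ‖y‖ → ‖y‖ < 1 → y ∈ Ω := by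
    intro y h1 h2
    simp only [hΩdef, mem_sdiff, mem_ball, mem_closedBall, dist_zero_right]
    exact ⟨h2, not_le.2 h1⟩
  have hvn : ∀ y ∈ closure Ω, 0 ≤ v y := by
    refine min_principle (by omega) hΩ sdiff_subset hv (fun y hy => ?_) hfr
    have h1 := heq y hy
    have h2 := hfn y hy
    linarith
  obtain ⟨u, hu, hu0, huv⟩ := exists_cutoff (r1 := 3 / 2 * ρ) (r2 := (1 + ρ₂) / 2) hρ
    (by linarith) (by linarith) (by linarith) (hv.mono subset_closure)
    (fun y hy => hvn y (subset_closure hy))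
  have hlu : ∀ y : EuclideanSpace ℝ (Fin n), 3 / 2 * ρ < ‖y‖ → ‖y‖ < (1 + ρ₂) / 2 →
      - lap u y = f y := by
    intro y h1 h2
    rw [← heq y (hmem y (by linarith) (by linarith))]
    congr 1
    apply lap_congr
    filter_upwards [continuous_norm.continuousAt.eventually_const_lt h1,
      continuous_norm.continuousAt.eventually_lt_const h2] with z hz1 hz2
    exact huv z hz1.le hz2.le
  have hlu0 : ∀ y : EuclideanSpace ℝ (Fin n), 3 / 2 * ρ < ‖y‖ → ‖y‖ < (1 + ρ₂) / 2 →
      0 ≤ - lap u y := by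
    intro y h1 h2
    rw [hlu y h1 h2]
    exact hfn y (hmem y (by linarith) (by linarith))
  have hclass : SupClass n (3 / 4 * ρ₀) ((1 + ρ₂) / 2) u := by
    refine ⟨hu, hu0, fun y h1 h2 => ?_⟩
    have := hlu0 y (by linarith) h2
    linarith
  have hux := hH u hclass x (by linarith) hx2
  rw [huv x (by linarith) (by linarith)] at hux
  have hvx : 0 ≤ v x := hvn x (subset_closure (hmem x (by linarith) (by linarith)))
  obtain ⟨φ, hφ, hφ0, hφin, hφout, hφA, hφC, hφN⟩ := hT ρ hρ hρ0
  have hφs : HasCompactSupport φ := by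
    apply HasCompactSupport.intro (isCompact_closedBall (0 : EuclideanSpace ℝ (Fin n)) 1)
    intro y hy
    rw [mem_closedBall, dist_zero_right, not_le] at hy
    exact hφout y (by linarith)
  have hlφs : HasCompactSupport (lap φ) := by
    apply HasCompactSupport.intro (isCompact_closedBall (0 : EuclideanSpace ℝ (Fin n)) 1)
    intro y hy
    rw [mem_closedBall, dist_zero_right, not_le] at hy
    have : φ =ᶠ[nhds y] fun _ => 0 := by
      filter_upwards [continuous_norm.continuousAt.eventually_const_lt hy] with z hz
      exact hφout z (by linarith)
    rw [lap_congr this]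
    simp [lap]
  have hAc : IsCompact {y : EuclideanSpace ℝ (Fin n) | 2 * ρ ≤ ‖y‖ ∧ ‖y‖ ≤ ρ₀} := annulus_compact
  have hKc : IsCompact {y : EuclideanSpace ℝ (Fin n) | ρ₀ ≤ ‖y‖ ∧ ‖y‖ ≤ ρ₂} := annulus_compact
  have step1 : ∫ y in {y : EuclideanSpace ℝ (Fin n) | 2 * ρ ≤ ‖y‖ ∧ ‖y‖ ≤ ρ₀}, f y
      ≤ ∫ y, 1000 * -(φ y * lap u y) := by
    rw [← integral_indicator hAc.measurableSet]
    refine integral_mono ((integrable_indicator_iff hAc.measurableSet).2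
      ((hf.mono ?_).integrableOn_compact hAc)) ?_ ?_
    · intro y hy
      exact subset_closure (hmem y (by linarith [hy.1]) (by linarith [hy.2]))
    · exact (((hφ.continuous.mul (lap_cont hu)).integrable_of_hasCompactSupport
        hφs.mul_right).neg).const_mul 1000
    · intro y
      by_cases hy : y ∈ {y : EuclideanSpace ℝ (Fin n) | 2 * ρ ≤ ‖y‖ ∧ ‖y‖ ≤ ρ₀}
      · rw [indicator_of_mem hy]
        have e1 := hφA y hy.1 hy.2
        have e2 := hlu0 y (by linarith [hy.1]) (by linarith [hy.2])
        rw [← hlu y (by linarith [hy.1]) (by linarith [hy.2])]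
        change - lap u y ≤ 1000 * -(φ y * lap u y)
        nlinarith
      · rw [indicator_of_notMem hy]
        change 0 ≤ 1000 * -(φ y * lap u y)
        by_cases h1 : ‖y‖ ≤ 3 / 2 * ρ
        · simp [hφin y h1]
        by_cases h2 : ρ₁ ≤ ‖y‖
        · simp [hφout y h2]
        · have e2 := hlu0 y (by linarith) (by linarith)
          have := mul_nonneg (hφ0 y) e2
          linarith
  have step2 : ∫ y, 1000 * -(φ y * lap u y) = 1000 * ∫ y, -(lap φ y * u y) := by
    rw [integral_const_mul, integral_neg, integral_neg, green hφ hu hφs]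
  have step3 : ∫ y, -(lap φ y * u y)
      ≤ Ct * ∫ y in {y : EuclideanSpace ℝ (Fin n) | ρ₀ ≤ ‖y‖ ∧ ‖y‖ ≤ ρ₂}, u y := by
    rw [← integral_indicator hKc.measurableSet, ← integral_const_mul]
    refine integral_mono (((lap_cont hφ).mul hu.continuous).integrable_of_hasCompactSupport
        hlφs.mul_right).neg (((integrable_indicator_iff hKc.measurableSet).2
      (hu.continuous.continuousOn.integrableOn_compact hKc)).const_mul Ct) ?_
    intro y
    change -(lap φ y * u y) ≤ Ct * _
    by_cases hy : ρ₀ ≤ ‖y‖ ∧ ‖y‖ ≤ ρ₁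
    · rw [indicator_of_mem (show y ∈ {y : EuclideanSpace ℝ (Fin n) | ρ₀ ≤ ‖y‖ ∧ ‖y‖ ≤ ρ₂} from
        ⟨hy.1, by linarith [hy.2]⟩)]
      have := mul_le_mul_of_nonneg_right (hφC y hy.1 hy.2) (hu0 y)
      linarith
    · have e1 := mul_le_mul_of_nonneg_right (hφN y hy) (hu0 y)
      have e2 : 0 ≤ Ct * indicator {y : EuclideanSpace ℝ (Fin n) | ρ₀ ≤ ‖y‖ ∧ ‖y‖ ≤ ρ₂} u y :=
        mul_nonneg hCt.le (indicator_nonneg (fun w _ => hu0 w) y)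
      linarith
  have hfin : ∫ y in {y : EuclideanSpace ℝ (Fin n) | 2 * ρ ≤ ‖y‖ ∧ ‖y‖ ≤ ρ₀}, f y
      ≤ 1000 * (Ct * Ch) * v x := by
    have := mul_le_mul_of_nonneg_left hux hCt.le
    linarith
  rw [one_div, inv_mul_le_iff₀ (by linarith)]
  linarith
end
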